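/- arXiv:1810.12232 — 3 statements merged into one kernel-verified Lean document; each statement's English description precedes it below -/
import Mathlib

section
/- There exists a constant C > 0, depending only on Ω, ω₀, ω and η⁰, such that for every T > 0, every bounded measurable potential a, and every classical nonnegative solution q of the adjoint heat equation with Dirichlet boundary condition, one has ∫_Ω q(0,x)² dx ≤ exp(C(1 + 1/T + T‖a‖_∞ + ‖a‖_∞^{1/2})) (∫₀^T ∫_ω q(t,x) dx dt)². -/
open MeasureTheory Real Set RealInnerProductSpace

noncomputable def spaceLaplacian {N : ℕ} (f : EuclideanSpace ℝ (Fin N) → ℝ)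
    (x : EuclideanSpace ℝ (Fin N)) : ℝ :=
  ∑ i : Fin N, fderiv ℝ (fun y => fderiv ℝ f y (EuclideanSpace.single i 1)) x
    (EuclideanSpace.single i 1)

/-!
Write `A = ‖a‖_∞` and let `θ = l η⁰` with `l` large. For `s = R T` with `R = 1 / T + 1 + √A`, the
weight `φ(t, x) = exp (-(s / t) (K - θ x)) - exp (-(s / t) K)` vanishes on `∂Ω` and as `t → 0⁺`,
and satisfies `∂ₜφ + A φ - Δφ ≤ 7 K 1_ω - K exp (-(s / t) K)`: away from `ω` the term
`(s / t)² ‖∇θ‖²` of `Δφ` dominates everything else. Pairing the equation with `φ` and integrating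
in time therefore bounds `∫∫ exp (-(s / t) K) q` by `7 ∫∫_ω q`. Conversely, comparison with the
heat kernel centred at `x₀` bounds `q (0, x₀)` by the mass of `q` at any time `t ∈ (T / 2, T)`, up
to a factor `exp (A T + N / T)`, and there `exp (-(s / t) K) ≥ exp (-2 K R)`. This gives a pointwise
bound of `q (0, ·)` by `∫∫_ω q`, hence the `L²` bound. As `∂Ω` need not be regular, Green's identity
in `Ω` is replaced by an inequality, obtained by truncating near `∂Ω` with a convex function.
-/

open Filter Module InnerProductSpace
open scoped Topology Gradient Laplacian

section Laplacian

variable {E : Type*} [NormedAddCommGroup E]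

lemma differentiableAt_fderiv_of_contDiffAt_two [NormedSpace ℝ E] {u : E → ℝ} {x : E}
    (hu : ContDiffAt ℝ 2 u x) : DifferentiableAt ℝ (fderiv ℝ u) x :=
  (hu.fderiv_right (m := 1) (by norm_num)).differentiableAt one_ne_zero

variable [InnerProductSpace ℝ E]

lemma fderiv_norm_sub_sq (x₀ : E) :
    fderiv ℝ (fun y => ‖y - x₀‖ ^ 2) = fun x => (2 : ℝ) • innerSL ℝ (x - x₀) := by
  funext x
  simpa [← Nat.cast_smul_eq_nsmul ℝ] using (((hasFDerivAt_id x).sub_const x₀).norm_sq).fderiv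

variable [FiniteDimensional ℝ E] {ι : Type*} [Fintype ι] {u : E → ℝ} {x : E}

lemma laplacian_eq_sum_fderiv_fderiv (b : OrthonormalBasis ι ℝ E) (u : E → ℝ) (x : E) :
    Δ u x = ∑ i, fderiv ℝ (fderiv ℝ u) x (b i) (b i) := by
  simp [laplacian_eq_iteratedFDeriv_orthonormalBasis u b, iteratedFDeriv_two_apply]

lemma laplacian_eq_sum_fderiv_apply (b : OrthonormalBasis ι ℝ E)
    (h : DifferentiableAt ℝ (fderiv ℝ u) x) :
    Δ u x = ∑ i, fderiv ℝ (fun y => fderiv ℝ u y (b i)) x (b i) := by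
  rw [laplacian_eq_sum_fderiv_fderiv b]
  refine Finset.sum_congr rfl fun i _ => ?_
  rw [fderiv_clm_apply h (differentiableAt_const _)]
  simp

lemma sum_sq_fderiv_eq_norm_gradient_sq (b : OrthonormalBasis ι ℝ E) (u : E → ℝ) (x : E) :
    ∑ i, fderiv ℝ u x (b i) ^ 2 = ‖∇ u x‖ ^ 2 := by
  rw [← b.sum_sq_norm_inner_left]
  simp [gradient, toDual_symm_apply]

lemma laplacian_comp {φ : ℝ → ℝ} (hφ : ContDiffAt ℝ 2 φ (u x)) (hu : ContDiffAt ℝ 2 u x) :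
    Δ (fun y => φ (u y)) x =
      deriv φ (u x) * Δ u x + deriv (deriv φ) (u x) * ‖∇ u x‖ ^ 2 := by
  have hfirst : fderiv ℝ (fun y => φ (u y)) =ᶠ[𝓝 x] (deriv φ ∘ u) • fderiv ℝ u := by
    filter_upwards [hu.eventually (by simp), hu.continuousAt.eventually (hφ.eventually (by simp))]
      with y huy hφy
    exact ((hφy.differentiableAt two_ne_zero).hasDerivAt.comp_hasFDerivAt y
      (huy.differentiableAt two_ne_zero).hasFDerivAt).fderiv
  have hφ' : HasDerivAt (deriv φ) (deriv (deriv φ) (u x)) (u x) :=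
    ((hφ.derivWithin (m := 1) (by norm_num)).differentiableAt one_ne_zero).hasDerivAt
  have hsecond := (hφ'.comp_hasFDerivAt x (hu.differentiableAt two_ne_zero).hasFDerivAt).smul
    (differentiableAt_fderiv_of_contDiffAt_two hu).hasFDerivAt
  let b := stdOrthonormalBasis ℝ E
  rw [laplacian_eq_sum_fderiv_fderiv b, laplacian_eq_sum_fderiv_fderiv b,
    ← sum_sq_fderiv_eq_norm_gradient_sq b, hfirst.fderiv_eq, hsecond.fderiv,
    Finset.mul_sum, Finset.mul_sum, ← Finset.sum_add_distrib]
  refine Finset.sum_congr rfl fun i _ => ?_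
  simp
  ring

lemma deriv_mul_laplacian_le_laplacian_comp {φ : ℝ → ℝ} (hφ : ContDiffAt ℝ 2 φ (u x))
    (hu : ContDiffAt ℝ 2 u x) (hφ_convex : 0 ≤ deriv (deriv φ) (u x)) :
    deriv φ (u x) * Δ u x ≤ Δ (fun y => φ (u y)) x := by
  rw [laplacian_comp hφ hu]
  exact le_add_of_nonneg_right (mul_nonneg hφ_convex (sq_nonneg _))

lemma continuousOn_laplacian {U : Set E} (hU : IsOpen U) (hu : ContDiffOn ℝ 2 u U) :
    ContinuousOn (Δ u) U := by
  have hsecond : ContinuousOn (fderiv ℝ (fderiv ℝ u)) U :=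
    (hu.fderiv_of_isOpen hU (m := 1) (by norm_num)).continuousOn_fderiv_of_isOpen hU le_rfl
  rw [funext (laplacian_eq_sum_fderiv_fderiv (stdOrthonormalBasis ℝ E) u)]
  fun_prop

lemma laplacian_norm_sub_sq (x₀ x : E) : Δ (fun y => ‖y - x₀‖ ^ 2) x = 2 * finrank ℝ E := by
  have hsecond : fderiv ℝ (fun y => (2 : ℝ) • innerSL ℝ (y - x₀)) x = (2 : ℝ) • innerSL ℝ :=
    (((innerSL ℝ).hasFDerivAt.comp x ((hasFDerivAt_id x).sub_const x₀)).const_smul (2 : ℝ)).fderiv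
  rw [laplacian_eq_sum_fderiv_fderiv (stdOrthonormalBasis ℝ E), fderiv_norm_sub_sq, hsecond]
  simp_rw [smul_apply]
  simp [innerSL_apply_apply ℝ, mul_comm]

lemma norm_gradient_norm_sub_sq (x₀ x : E) : ‖∇ (fun y => ‖y - x₀‖ ^ 2) x‖ = 2 * ‖x - x₀‖ := by
  rw [gradient, LinearIsometryEquiv.norm_map, fderiv_norm_sub_sq, norm_smul, innerSL_apply_norm]
  norm_num

end Laplacian

section Green

section CompactSupport

variable {E : Type*} [TopologicalSpace E] [MeasurableSpace E] [OpensMeasurableSpace E]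
  {μ : Measure E} [IsFiniteMeasureOnCompacts μ] {U : Set E} {f g : E → ℝ}

lemma integrable_mul_of_tsupport_subset (hU : IsOpen U) (hf : ContinuousOn f U)
    (hg : Continuous g) (hgc : HasCompactSupport g) (hgU : tsupport g ⊆ U) :
    Integrable (fun x => f x * g x) μ := by
  refine Continuous.integrable_of_hasCompactSupport ?_ hgc.mul_left
  refine continuous_of_tsupport fun x hx => ?_
  exact (hf.continuousAt (hU.mem_nhds (hgU (tsupport_mul_subset_right hx)))).mul hg.continuousAt

end CompactSupport

section IntegrationByParts

variable {E : Type*} [NormedAddCommGroup E] [InnerProductSpace ℝ E] [FiniteDimensional ℝ E]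
  {U : Set E} {v w : E → ℝ}

lemma tsupport_laplacian_subset (w : E → ℝ) : tsupport (Δ w) ⊆ tsupport w := by
  refine closure_minimal (fun x hx => ?_) (isClosed_tsupport w)
  contrapose! hx
  have hzero : w =ᶠ[𝓝 x] fun _ => 0 := notMem_tsupport_iff_eventuallyEq.1 hx
  simp [laplacian_congr_nhds hzero |>.eq_of_nhds]

variable [MeasurableSpace E] [BorelSpace E] {μ : Measure E} [μ.IsAddHaarMeasure]

lemma integral_mul_fderiv_eq_neg_fderiv_mul_of_tsupport_subset (hU : IsOpen U)
    (hv : ContDiffOn ℝ 1 v U) (hw : ContDiff ℝ 1 w) (hwc : HasCompactSupport w)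
    (hwU : tsupport w ⊆ U) (e : E) :
    ∫ x, v x * fderiv ℝ w x e ∂μ = -∫ x, fderiv ℝ v x e * w x ∂μ := by
  have hv' : ContinuousOn (fun x => fderiv ℝ v x e) U :=
    (hv.continuousOn_fderiv_of_isOpen hU le_rfl).clm_apply continuousOn_const
  have hw' : Continuous (fun x => fderiv ℝ w x e) :=
    (hw.continuous_fderiv one_ne_zero).clm_apply continuous_const
  exact integral_mul_fderiv_eq_neg_fderiv_mul_of_integrable
    (integrable_mul_of_tsupport_subset hU hv' hw.continuous hwc hwU)
    (integrable_mul_of_tsupport_subset hU hv.continuousOn hw' (hwc.fderiv_apply ℝ e)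
      ((tsupport_fderiv_apply_subset ℝ e).trans hwU))
    (integrable_mul_of_tsupport_subset hU hv.continuousOn hw.continuous hwc hwU)
    (fun x hx => (hv.contDiffAt (hU.mem_nhds (hwU hx))).differentiableAt one_ne_zero)
    (fun x _ => hw.differentiable one_ne_zero x)

lemma integral_mul_laplacian_comm (hU : IsOpen U) (hv : ContDiffOn ℝ 2 v U)
    (hw : ContDiff ℝ 2 w) (hwc : HasCompactSupport w) (hwU : tsupport w ⊆ U) :
    ∫ x, v x * Δ w x ∂μ = ∫ x, Δ v x * w x ∂μ := by
  let b := stdOrthonormalBasis ℝ E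
  have hw' (i) : ContDiff ℝ 1 (fun y => fderiv ℝ w y (b i)) :=
    (hw.fderiv_right (m := 1) (by norm_num)).clm_apply contDiff_const
  have hv' (i) : ContDiffOn ℝ 1 (fun y => fderiv ℝ v y (b i)) U :=
    (hv.fderiv_of_isOpen hU (m := 1) (by norm_num)).clm_apply contDiffOn_const
  have hwc' (i) := hwc.fderiv_apply ℝ (b i)
  have hwU' (i) := (tsupport_fderiv_apply_subset ℝ (f := w) (b i)).trans hwU
  calc ∫ x, v x * Δ w x ∂μ
      = ∫ x, ∑ i, v x * fderiv ℝ (fun y => fderiv ℝ w y (b i)) x (b i) ∂μ := by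
        refine integral_congr_ae (.of_forall fun x => ?_)
        simp only [laplacian_eq_sum_fderiv_apply b
          (differentiableAt_fderiv_of_contDiffAt_two hw.contDiffAt), Finset.mul_sum]
    _ = ∑ i, ∫ x, v x * fderiv ℝ (fun y => fderiv ℝ w y (b i)) x (b i) ∂μ :=
        integral_finsetSum _ fun i _ => integrable_mul_of_tsupport_subset hU hv.continuousOn
          (((hw' i).continuous_fderiv one_ne_zero).clm_apply continuous_const)
          ((hwc' i).fderiv_apply ℝ (b i)) ((tsupport_fderiv_apply_subset ℝ _).trans (hwU' i))
    _ = ∑ i, ∫ x, fderiv ℝ (fun y => fderiv ℝ v y (b i)) x (b i) * w x ∂μ := by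
        refine Finset.sum_congr rfl fun i _ => ?_
        rw [integral_mul_fderiv_eq_neg_fderiv_mul_of_tsupport_subset hU
            (hv.of_le one_le_two) (hw' i) (hwc' i) (hwU' i),
          integral_mul_fderiv_eq_neg_fderiv_mul_of_tsupport_subset hU (hv' i)
            (hw.of_le one_le_two) hwc hwU, neg_neg]
    _ = ∫ x, ∑ i, fderiv ℝ (fun y => fderiv ℝ v y (b i)) x (b i) * w x ∂μ :=
        (integral_finsetSum _ fun i _ => integrable_mul_of_tsupport_subset hU
          (((hv' i).continuousOn_fderiv_of_isOpen hU le_rfl).clm_apply continuousOn_const)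
          hw.continuous hwc hwU).symm
    _ = ∫ x, Δ v x * w x ∂μ := by
        refine integral_congr_ae (.of_forall fun x => ?_)
        by_cases hx : x ∈ U
        · simp only [laplacian_eq_sum_fderiv_apply b (differentiableAt_fderiv_of_contDiffAt_two
            (hv.contDiffAt (hU.mem_nhds hx))), Finset.sum_mul]
        · simp [image_eq_zero_of_notMem_tsupport (notMem_subset hwU hx)]

end IntegrationByParts

end Green

/-- A convex `C²` regularization of the positive part `s ↦ max s 0`, vanishing for `s ≤ ε` and of
slope `1` for `s ≥ 2 * ε`. -/
noncomputable def smoothPosPart (ε s : ℝ) : ℝ :=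
  ∫ r in 0..s, smoothTransition (r / ε - 1)

namespace smoothPosPart

variable {ε s : ℝ}

lemma hasDerivAt (ε s : ℝ) :
    HasDerivAt (smoothPosPart ε) (smoothTransition (s / ε - 1)) s := by
  have hcont : Continuous fun r => smoothTransition (r / ε - 1) := by fun_prop
  exact hcont.integral_hasStrictDerivAt 0 s |>.hasDerivAt

lemma deriv_eq (ε : ℝ) : deriv (smoothPosPart ε) = fun s => smoothTransition (s / ε - 1) :=
  funext fun s => (hasDerivAt ε s).deriv

lemma contDiff (ε : ℝ) : ContDiff ℝ 2 (smoothPosPart ε) := by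
  refine contDiff_succ_iff_deriv (n := 1).2
    ⟨fun s => (hasDerivAt ε s).differentiableAt, by simp, ?_⟩
  rw [deriv_eq]
  exact smoothTransition.contDiff.comp (by fun_prop)

lemma deriv_deriv_nonneg (hε : 0 < ε) (s : ℝ) : 0 ≤ deriv (deriv (smoothPosPart ε)) s := by
  rw [deriv_eq]
  refine Monotone.deriv_nonneg (smoothTransition.monotone.comp fun a b hab => ?_)
  gcongr

lemma abs_deriv_le_one (ε s : ℝ) : |deriv (smoothPosPart ε) s| ≤ 1 := by
  rw [deriv_eq, abs_of_nonneg (smoothTransition.nonneg _)]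
  exact smoothTransition.le_one _

lemma eq_zero_of_le (hε : 0 < ε) (hs : s ≤ ε) : smoothPosPart ε s = 0 := by
  refine intervalIntegral.integral_zero_ae (.of_forall fun r hr => ?_)
  refine smoothTransition.zero_of_nonpos (sub_nonpos.2 ((div_le_one hε).2 ?_))
  exact hr.2.trans (max_le hε.le hs)

lemma abs_le (ε : ℝ) (hs : 0 ≤ s) : |smoothPosPart ε s| ≤ s := by
  have := intervalIntegral.norm_integral_le_of_norm_le_const (a := 0) (b := s) (C := 1)
    fun r _ => (norm_of_nonneg (smoothTransition.nonneg (r / ε - 1))).trans_le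
      (smoothTransition.le_one _)
  simpa [smoothPosPart, abs_of_nonneg hs] using this

lemma tendsto_deriv (hs : 0 < s) :
    Tendsto (fun ε => deriv (smoothPosPart ε) s) (𝓝[>] 0) (𝓝 1) := by
  refine tendsto_const_nhds.congr' ?_
  filter_upwards [Ioc_mem_nhdsGT (half_pos hs)] with ε hε
  simp only [deriv_eq]
  rw [smoothTransition.one_of_one_le]
  rw [le_sub_iff_add_le, le_div_iff₀ hε.1]
  linarith [hε.2]

lemma tendsto (hs : 0 ≤ s) : Tendsto (fun ε => smoothPosPart ε s) (𝓝[>] 0) (𝓝 s) := by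
  have hlim : Tendsto (fun ε => smoothPosPart ε s) (𝓝[>] 0) (𝓝 (∫ _ in 0..s, (1 : ℝ))) := by
    refine intervalIntegral.tendsto_integral_filter_of_dominated_convergence (fun _ => 1)
      (.of_forall fun ε => (by fun_prop : Continuous _).aestronglyMeasurable)
      (.of_forall fun ε => .of_forall fun r _ => ?_) (by simp) (.of_forall fun r hr => ?_)
    · simpa only [deriv_eq, Real.norm_eq_abs] using abs_deriv_le_one ε r
    · rw [uIoc_of_le hs] at hr
      simpa only [deriv_eq] using tendsto_deriv hr.1
  simpa using hlim

end smoothPosPart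

section KatoGreen

section Truncation

variable {E : Type*} [NormedAddCommGroup E] {Ω : Set E} {u : E → ℝ} {φ : ℝ → ℝ} {ε : ℝ}

lemma tsupport_indicator_comp_subset (huc : ContinuousOn u (closure Ω))
    (hφ₀ : ∀ s < ε, φ s = 0) :
    tsupport (Ω.indicator fun x => φ (u x)) ⊆ closure Ω ∩ u ⁻¹' Ici ε := by
  refine closure_minimal (fun x hx => ?_)
    (huc.preimage_isClosed_of_isClosed isClosed_closure isClosed_Ici)
  have hxΩ : x ∈ Ω := mem_of_indicator_ne_zero hx
  refine ⟨subset_closure hxΩ, le_of_not_gt fun hlt : u x < ε => hx ?_⟩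
  rw [indicator_of_mem hxΩ, hφ₀ _ hlt]

lemma hasCompactSupport_indicator_comp [ProperSpace E] (hΩb : Bornology.IsBounded Ω)
    (huc : ContinuousOn u (closure Ω)) (hφ₀ : ∀ s < ε, φ s = 0) :
    HasCompactSupport (Ω.indicator fun x => φ (u x)) :=
  hΩb.isCompact_closure.of_isClosed_subset (isClosed_tsupport _)
    ((tsupport_indicator_comp_subset huc hφ₀).trans inter_subset_left)

lemma tsupport_indicator_comp_subset_self (hΩ : IsOpen Ω) (huc : ContinuousOn u (closure Ω))
    (hu₀ : ∀ x ∈ frontier Ω, u x = 0) (hε : 0 < ε) (hφ₀ : ∀ s < ε, φ s = 0) :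
    tsupport (Ω.indicator fun x => φ (u x)) ⊆ Ω := by
  refine (tsupport_indicator_comp_subset huc hφ₀).trans fun x ⟨hx, hεx⟩ => ?_
  by_contra hxΩ
  rw [mem_preimage, hu₀ x (hΩ.frontier_eq ▸ ⟨hx, hxΩ⟩)] at hεx
  exact hε.not_ge hεx

lemma contDiff_indicator_comp [NormedSpace ℝ E] {n : WithTop ℕ∞} (hΩ : IsOpen Ω)
    (hu : ContDiffOn ℝ n u Ω) (huc : ContinuousOn u (closure Ω))
    (hu₀ : ∀ x ∈ frontier Ω, u x = 0) (hε : 0 < ε) (hφ : ContDiff ℝ n φ)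
    (hφ₀ : ∀ s < ε, φ s = 0) :
    ContDiff ℝ n (Ω.indicator fun x => φ (u x)) := by
  refine contMDiff_iff_contDiff.1 (contMDiff_of_tsupport fun x hx => ContDiffAt.contMDiffAt ?_)
  have hxΩ := hΩ.mem_nhds (tsupport_indicator_comp_subset_self hΩ huc hu₀ hε hφ₀ hx)
  refine (hφ.contDiffAt.comp x (hu.contDiffAt hxΩ)).congr_of_eventuallyEq ?_
  filter_upwards [hxΩ] with y hy using indicator_of_mem hy _

lemma integrableOn_comp_mul [ProperSpace E] [MeasurableSpace E] [BorelSpace E] {μ : Measure E}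
    [IsFiniteMeasureOnCompacts μ] [NormedSpace ℝ E] {f : E → ℝ} (hΩ : IsOpen Ω)
    (hΩb : Bornology.IsBounded Ω) (huc : ContinuousOn u (closure Ω))
    (hu₀ : ∀ x ∈ frontier Ω, u x = 0) (hε : 0 < ε) (hφ : Continuous φ)
    (hφ₀ : ∀ s < ε, φ s = 0) (hf : ContinuousOn f Ω) :
    IntegrableOn (fun x => φ (u x) * f x) Ω μ := by
  have hw : Continuous (Ω.indicator fun x => φ (u x)) := (contDiff_indicator_comp (n := 0) hΩ
    (contDiffOn_zero.2 (huc.mono subset_closure)) huc hu₀ hε (contDiff_zero.2 hφ) hφ₀).continuous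
  refine (integrable_mul_of_tsupport_subset hΩ hf hw
    (hasCompactSupport_indicator_comp hΩb huc hφ₀)
    (tsupport_indicator_comp_subset_self hΩ huc hu₀ hε hφ₀)).integrableOn.congr_fun
    (fun x hx => ?_) hΩ.measurableSet
  simp only [indicator_of_mem hx, mul_comm]

end Truncation

variable {E : Type*} [NormedAddCommGroup E] [InnerProductSpace ℝ E] [FiniteDimensional ℝ E]
  [MeasurableSpace E] [BorelSpace E] {μ : Measure E} [μ.IsAddHaarMeasure]
  {Ω : Set E} {u v : E → ℝ}

lemma setIntegral_deriv_comp_mul_laplacian_le {φ : ℝ → ℝ} {ε : ℝ} (hΩ : IsOpen Ω)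
    (hΩb : Bornology.IsBounded Ω) (hu : ContDiffOn ℝ 2 u Ω) (huc : ContinuousOn u (closure Ω))
    (hu₀ : ∀ x ∈ frontier Ω, u x = 0) (hv : ContDiffOn ℝ 2 v Ω) (hv_nonneg : ∀ x ∈ Ω, 0 ≤ v x)
    (hε : 0 < ε) (hφ : ContDiff ℝ 2 φ) (hφ₀ : ∀ s < ε, φ s = 0)
    (hφ_convex : ∀ s, 0 ≤ deriv (deriv φ) s) :
    ∫ x in Ω, deriv φ (u x) * (v x * Δ u x) ∂μ ≤ ∫ x in Ω, φ (u x) * Δ v x ∂μ := by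
  have hφ'₀ : ∀ s < ε, deriv φ s = 0 := fun s hs => by
    have hzero : φ =ᶠ[𝓝 s] fun _ => 0 := (eventually_lt_nhds hs).mono hφ₀
    simp [hzero.deriv_eq]
  set w := Ω.indicator fun x => φ (u x) with hw_def
  have hw : ContDiff ℝ 2 w := contDiff_indicator_comp hΩ hu huc hu₀ hε hφ hφ₀
  have hwc : HasCompactSupport w := hasCompactSupport_indicator_comp hΩb huc hφ₀
  have hwΩ : tsupport w ⊆ Ω := tsupport_indicator_comp_subset_self hΩ huc hu₀ hε hφ₀
  have hΔwΩ : tsupport (Δ w) ⊆ Ω := (tsupport_laplacian_subset w).trans hwΩ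
  have hΔw : ∀ x ∈ Ω, deriv φ (u x) * Δ u x ≤ Δ w x := fun x hx => by
    have hlocal : w =ᶠ[𝓝 x] fun x => φ (u x) := by
      filter_upwards [hΩ.mem_nhds hx] with y hy using indicator_of_mem hy _
    rw [(laplacian_congr_nhds hlocal).eq_of_nhds]
    exact deriv_mul_laplacian_le_laplacian_comp hφ.contDiffAt
      (hu.contDiffAt (hΩ.mem_nhds hx)) (hφ_convex _)
  calc ∫ x in Ω, deriv φ (u x) * (v x * Δ u x) ∂μ
      ≤ ∫ x in Ω, v x * Δ w x ∂μ := by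
        refine setIntegral_mono_on (integrableOn_comp_mul hΩ hΩb huc hu₀ hε
          (hφ.continuous_deriv one_le_two) hφ'₀
          (hv.continuousOn.mul (continuousOn_laplacian hΩ hu)))
          (integrable_mul_of_tsupport_subset hΩ hv.continuousOn
            (continuousOn_univ.1 (continuousOn_laplacian isOpen_univ hw.contDiffOn))
            (hwc.of_isClosed_subset (isClosed_tsupport _) (tsupport_laplacian_subset w))
            hΔwΩ).integrableOn hΩ.measurableSet fun x hx => ?_
        rw [mul_left_comm]
        exact mul_le_mul_of_nonneg_left (hΔw x hx) (hv_nonneg x hx)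
    _ = ∫ x, v x * Δ w x ∂μ := setIntegral_eq_integral_of_forall_compl_eq_zero fun x hx => by
        rw [image_eq_zero_of_notMem_tsupport (notMem_subset hΔwΩ hx), mul_zero]
    _ = ∫ x, Δ v x * w x ∂μ := integral_mul_laplacian_comm hΩ hv hw hwc hwΩ
    _ = ∫ x in Ω, φ (u x) * Δ v x ∂μ := by
        rw [← integral_indicator hΩ.measurableSet]
        congr with x
        by_cases hx : x ∈ Ω <;> simp [hw_def, hx, mul_comm]

lemma setIntegral_mul_laplacian_le (hΩ : IsOpen Ω) (hΩb : Bornology.IsBounded Ω)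
    (hu : ContDiffOn ℝ 2 u Ω) (huc : ContinuousOn u (closure Ω))
    (hu₀ : ∀ x ∈ frontier Ω, u x = 0) (hu_nonneg : ∀ x ∈ Ω, 0 ≤ u x)
    (hΔu : ∀ x ∈ Ω, u x = 0 → Δ u x = 0)
    (hv : ContDiffOn ℝ 2 v Ω) (hv_nonneg : ∀ x ∈ Ω, 0 ≤ v x)
    (hvΔu : IntegrableOn (fun x => v x * Δ u x) Ω μ)
    (huΔv : IntegrableOn (fun x => u x * Δ v x) Ω μ) :
    ∫ x in Ω, v x * Δ u x ∂μ ≤ ∫ x in Ω, u x * Δ v x ∂μ := by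
  have hu_meas : AEMeasurable u (μ.restrict Ω) :=
    (hu.continuousOn.aemeasurable hΩ.measurableSet)
  have hleft : Tendsto (fun ε => ∫ x in Ω, deriv (smoothPosPart ε) (u x) * (v x * Δ u x) ∂μ)
      (𝓝[>] 0) (𝓝 (∫ x in Ω, v x * Δ u x ∂μ)) := by
    refine tendsto_integral_filter_of_dominated_convergence (fun x => |v x * Δ u x|)
      (.of_forall fun ε => ?_) (.of_forall fun ε => .of_forall fun x => ?_) hvΔu.abs
      (ae_restrict_of_forall_mem hΩ.measurableSet fun x hx => ?_)
    · exact (((smoothPosPart.contDiff ε).continuous_deriv one_le_two).measurable.comp_aemeasurable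
        hu_meas).aestronglyMeasurable.mul hvΔu.aestronglyMeasurable
    · rw [norm_mul, Real.norm_eq_abs, Real.norm_eq_abs]
      exact mul_le_of_le_one_left (abs_nonneg _) (smoothPosPart.abs_deriv_le_one ε _)
    · rcases (hu_nonneg x hx).eq_or_lt with hux | hux
      · simp [hΔu x hx hux.symm]
      · simpa using (smoothPosPart.tendsto_deriv hux).mul_const (v x * Δ u x)
  have hright : Tendsto (fun ε => ∫ x in Ω, smoothPosPart ε (u x) * Δ v x ∂μ)
      (𝓝[>] 0) (𝓝 (∫ x in Ω, u x * Δ v x ∂μ)) := by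
    refine tendsto_integral_filter_of_dominated_convergence (fun x => |u x * Δ v x|)
      (.of_forall fun ε => ?_) (.of_forall fun ε => ?_) huΔv.abs
      (ae_restrict_of_forall_mem hΩ.measurableSet fun x hx =>
        (smoothPosPart.tendsto (hu_nonneg x hx)).mul_const _)
    · exact ((smoothPosPart.contDiff ε).continuous.measurable.comp_aemeasurable
        hu_meas).aestronglyMeasurable.mul
          ((continuousOn_laplacian hΩ hv).aestronglyMeasurable hΩ.measurableSet)
    · refine ae_restrict_of_forall_mem hΩ.measurableSet fun x hx => ?_
      rw [norm_mul, abs_mul, abs_of_nonneg (hu_nonneg x hx)]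
      exact mul_le_mul_of_nonneg_right (smoothPosPart.abs_le ε (hu_nonneg x hx)) (abs_nonneg _)
  refine le_of_tendsto_of_tendsto hleft hright ?_
  filter_upwards [self_mem_nhdsWithin] with ε hε
  exact setIntegral_deriv_comp_mul_laplacian_le hΩ hΩb hu huc hu₀ hv hv_nonneg hε
    (smoothPosPart.contDiff ε) (fun s hs => smoothPosPart.eq_zero_of_le hε hs.le)
    (smoothPosPart.deriv_deriv_nonneg hε)

end KatoGreen

section ParameterIntegral

lemma continuousOn_comp_prodMk_left {P X Y : Type*} [TopologicalSpace P] [TopologicalSpace X]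
    [TopologicalSpace Y] {I : Set P} {K : Set X} {f : P × X → Y} (hf : ContinuousOn f (I ×ˢ K))
    {t : P} (ht : t ∈ I) : ContinuousOn (fun x => f (t, x)) K :=
  hf.comp (by fun_prop) fun _ hx => ⟨ht, hx⟩

variable {X P : Type*} [TopologicalSpace X] [T2Space X] [MeasurableSpace X]
  [OpensMeasurableSpace X] [TopologicalSpace P] {μ : Measure X} [IsFiniteMeasureOnCompacts μ]
  {K s : Set X}

lemma continuousOn_setIntegral_of_isCompact [FirstCountableTopology P] {I : Set P}
    (hI : IsCompact I) (hK : IsCompact K) (hs : MeasurableSet s) (hsK : s ⊆ K)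
    {f : P × X → ℝ} (hf : ContinuousOn f (I ×ˢ K)) :
    ContinuousOn (fun t => ∫ x in s, f (t, x) ∂μ) I := by
  obtain ⟨C, hC⟩ := (hI.prod hK).exists_bound_of_continuousOn hf
  refine continuousOn_of_dominated (bound := fun _ => C) (fun t ht => ?_) (fun t ht => ?_)
    (integrableOn_const ((measure_mono hsK).trans_lt hK.measure_lt_top).ne) ?_
  · exact (((continuousOn_comp_prodMk_left hf ht).integrableOn_compact hK).mono_set
      hsK).aestronglyMeasurable
  · exact ae_restrict_of_forall_mem hs fun x hx => hC (t, x) ⟨ht, hsK hx⟩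
  · exact ae_restrict_of_forall_mem hs fun x hx => hf.comp (by fun_prop) fun t ht => ⟨ht, hsK hx⟩

lemma hasDerivAt_setIntegral_of_isCompact {I : Set ℝ} (hI : IsOpen I) (hK : IsCompact K)
    (hs : MeasurableSet s) (hsK : s ⊆ K) {f f' : ℝ × X → ℝ} (hf : ContinuousOn f (I ×ˢ K))
    (hf' : ContinuousOn f' (I ×ˢ K))
    (hderiv : ∀ t ∈ I, ∀ x ∈ s, HasDerivAt (fun τ => f (τ, x)) (f' (t, x)) t)
    {t : ℝ} (ht : t ∈ I) :
    HasDerivAt (fun τ => ∫ x in s, f (τ, x) ∂μ) (∫ x in s, f' (t, x) ∂μ) t := by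
  have hslice {g : ℝ × X → ℝ} (hg : ContinuousOn g (I ×ˢ K)) {τ : ℝ} (hτ : τ ∈ I) :
      IntegrableOn (fun x => g (τ, x)) s μ :=
    ((continuousOn_comp_prodMk_left hg hτ).integrableOn_compact hK).mono_set hsK
  obtain ⟨r, hr, hrI⟩ := Metric.nhds_basis_closedBall.mem_iff.1 (hI.mem_nhds ht)
  obtain ⟨C, hC⟩ := ((isCompact_closedBall t r).prod hK).exists_bound_of_continuousOn
    (hf'.mono (prod_mono_left hrI))
  refine (hasDerivAt_integral_of_dominated_loc_of_deriv_le (bound := fun _ => C)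
    (F := fun τ x => f (τ, x)) (F' := fun τ x => f' (τ, x)) (Metric.closedBall_mem_nhds t hr)
    ?_ (hslice hf ht) (hslice hf' ht).aestronglyMeasurable
    (ae_restrict_of_forall_mem hs fun x hx τ hτ => hC (τ, x) ⟨hτ, hsK hx⟩)
    (integrableOn_const ((measure_mono hsK).trans_lt hK.measure_lt_top).ne)
    (ae_restrict_of_forall_mem hs fun x hx τ hτ => hderiv τ (hrI hτ) x hx)).2
  filter_upwards [hI.mem_nhds ht] with τ hτ using (hslice hf hτ).aestronglyMeasurable

end ParameterIntegral

section AdjointSolution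

lemma integrableOn_of_continuousOn_closure {X : Type*} [MetricSpace X] [ProperSpace X]
    [MeasurableSpace X] [OpensMeasurableSpace X] {μ : Measure X} [IsFiniteMeasureOnCompacts μ]
    {s : Set X} (hs : Bornology.IsBounded s) {f : X → ℝ} (hf : ContinuousOn f (closure s)) :
    IntegrableOn f s μ :=
  (hf.integrableOn_compact hs.isCompact_closure).mono_set subset_closure

variable {E : Type*} [NormedAddCommGroup E] [InnerProductSpace ℝ E] [FiniteDimensional ℝ E]

/-- Classical nonnegative solutions `q`, with time derivative `qt`, of the adjoint heat equation
`-∂ₜq - Δq + a q = 0` on `(0, T) × Ω` with Dirichlet boundary condition, for some potential `a`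
with `|a| ≤ A`. The potential enters only through the differential inequality
`|∂ₜq + Δq| ≤ A q`. -/
structure IsNonnegAdjointSolution (Ω : Set E) (T A : ℝ) (q qt : ℝ × E → ℝ) : Prop where
  continuousOn : ContinuousOn q (Icc 0 T ×ˢ closure Ω)
  nonneg : ∀ t ∈ Icc 0 T, ∀ x ∈ closure Ω, 0 ≤ q (t, x)
  hasDerivAt : ∀ t ∈ Ioo 0 T, ∀ x ∈ Ω, HasDerivAt (fun τ => q (τ, x)) (qt (t, x)) t
  continuousOn_deriv : ContinuousOn qt (Ioo 0 T ×ˢ closure Ω)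
  contDiffOn : ∀ t ∈ Ioo 0 T, ContDiffOn ℝ 2 (fun x => q (t, x)) Ω
  abs_deriv_add_laplacian_le : ∀ t ∈ Ioo 0 T, ∀ x ∈ Ω,
    |qt (t, x) + Δ (fun y => q (t, y)) x| ≤ A * q (t, x)
  eq_zero_of_mem_frontier : ∀ t ∈ Ioo 0 T, ∀ x ∈ frontier Ω, q (t, x) = 0

namespace IsNonnegAdjointSolution

variable {Ω : Set E} {T A t : ℝ} {q qt : ℝ × E → ℝ}

lemma continuousOn_slice (h : IsNonnegAdjointSolution Ω T A q qt) (ht : t ∈ Icc 0 T) :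
    ContinuousOn (fun x => q (t, x)) (closure Ω) :=
  continuousOn_comp_prodMk_left h.continuousOn ht

lemma continuousOn_deriv_slice (h : IsNonnegAdjointSolution Ω T A q qt) (ht : t ∈ Ioo 0 T) :
    ContinuousOn (fun x => qt (t, x)) (closure Ω) :=
  continuousOn_comp_prodMk_left h.continuousOn_deriv ht

-- A zero of `q` is an interior minimum in time.
lemma laplacian_eq_zero_of_eq_zero (h : IsNonnegAdjointSolution Ω T A q qt) (ht : t ∈ Ioo 0 T)
    {x : E} (hx : x ∈ Ω) (hqx : q (t, x) = 0) : Δ (fun y => q (t, y)) x = 0 := by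
  have hmin : IsLocalMin (fun τ => q (τ, x)) t := by
    filter_upwards [Ioo_mem_nhds ht.1 ht.2] with τ hτ
    exact hqx.trans_le (h.nonneg τ (Ioo_subset_Icc_self hτ) x (subset_closure hx))
  have hle := h.abs_deriv_add_laplacian_le t ht x hx
  rw [hqx, hmin.hasDerivAt_eq_zero (h.hasDerivAt t ht x hx), mul_zero, zero_add] at hle
  exact abs_nonpos_iff.1 hle

variable [MeasurableSpace E] [BorelSpace E] {μ : Measure E} [μ.IsAddHaarMeasure]

lemma integrableOn_mul_laplacian (h : IsNonnegAdjointSolution Ω T A q qt) (hΩ : IsOpen Ω)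
    (hΩb : Bornology.IsBounded Ω) (ht : t ∈ Ioo 0 T) {ψ : E → ℝ}
    (hψ : ContinuousOn ψ (closure Ω)) :
    IntegrableOn (fun x => ψ x * Δ (fun y => q (t, y)) x) Ω μ := by
  have hdom : IntegrableOn (fun x => |ψ x| * (A * q (t, x) + |qt (t, x)|)) Ω μ :=
    integrableOn_of_continuousOn_closure hΩb <| hψ.abs.mul <|
      ((h.continuousOn_slice (Ioo_subset_Icc_self ht)).const_mul A).add
        (h.continuousOn_deriv_slice ht).abs
  refine hdom.mono' (((hψ.mono subset_closure).mul (continuousOn_laplacian hΩ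
    (h.contDiffOn t ht))).aestronglyMeasurable hΩ.measurableSet)
    (ae_restrict_of_forall_mem hΩ.measurableSet fun x hx => ?_)
  rw [norm_mul, norm_eq_abs, norm_eq_abs]
  gcongr
  calc |Δ (fun y => q (t, y)) x|
      = |(qt (t, x) + Δ (fun y => q (t, y)) x) - qt (t, x)| := by rw [add_sub_cancel_left]
    _ ≤ |qt (t, x) + Δ (fun y => q (t, y)) x| + |qt (t, x)| := abs_sub _ _
    _ ≤ A * q (t, x) + |qt (t, x)| := by
        gcongr; exact h.abs_deriv_add_laplacian_le t ht x hx

lemma hasDerivAt_setIntegral_mul (h : IsNonnegAdjointSolution Ω T A q qt) (hΩ : IsOpen Ω)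
    (hΩb : Bornology.IsBounded Ω) {ψ ψt : ℝ × E → ℝ}
    (hψ : ContinuousOn ψ (Ioo 0 T ×ˢ closure Ω)) (hψt : ContinuousOn ψt (Ioo 0 T ×ˢ closure Ω))
    (hderiv : ∀ t ∈ Ioo 0 T, ∀ x ∈ Ω, HasDerivAt (fun τ => ψ (τ, x)) (ψt (t, x)) t)
    (ht : t ∈ Ioo 0 T) :
    HasDerivAt (fun τ => ∫ x in Ω, ψ (τ, x) * q (τ, x) ∂μ)
      ((∫ x in Ω, ψt (t, x) * q (t, x) ∂μ) + ∫ x in Ω, ψ (t, x) * qt (t, x) ∂μ) t := by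
  have hq := h.continuousOn.mono (prod_mono_left Ioo_subset_Icc_self)
  rw [← integral_add (f := fun x => ψt (t, x) * q (t, x)) (g := fun x => ψ (t, x) * qt (t, x))
    (integrableOn_of_continuousOn_closure hΩb (continuousOn_comp_prodMk_left (hψt.mul hq) ht))
    (integrableOn_of_continuousOn_closure hΩb
      (continuousOn_comp_prodMk_left (hψ.mul h.continuousOn_deriv) ht))]
  exact hasDerivAt_setIntegral_of_isCompact isOpen_Ioo hΩb.isCompact_closure hΩ.measurableSet
    subset_closure (f := fun p => ψ p * q p) (f' := fun p => ψt p * q p + ψ p * qt p)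
    (hψ.mul hq) ((hψt.mul hq).add (hψ.mul h.continuousOn_deriv))
    (fun t ht x hx => (hderiv t ht x hx).mul (h.hasDerivAt t ht x hx)) ht

lemma abs_setIntegral_mul_deriv_add_laplacian_le (h : IsNonnegAdjointSolution Ω T A q qt)
    (hΩ : IsOpen Ω) (hΩb : Bornology.IsBounded Ω) (ht : t ∈ Ioo 0 T) {ψ : E → ℝ}
    (hψ : ContinuousOn ψ (closure Ω)) (hψ_nonneg : ∀ x ∈ Ω, 0 ≤ ψ x) :
    |(∫ x in Ω, ψ x * qt (t, x) ∂μ) + ∫ x in Ω, ψ x * Δ (fun y => q (t, y)) x ∂μ| ≤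
      A * ∫ x in Ω, ψ x * q (t, x) ∂μ := by
  have hint_qt : IntegrableOn (fun x => ψ x * qt (t, x)) Ω μ :=
    integrableOn_of_continuousOn_closure hΩb (hψ.mul (h.continuousOn_deriv_slice ht))
  have hint_q : IntegrableOn (fun x => A * (ψ x * q (t, x))) Ω μ :=
    integrableOn_of_continuousOn_closure hΩb
      ((hψ.mul (h.continuousOn_slice (Ioo_subset_Icc_self ht))).const_mul A)
  rw [← norm_eq_abs, ← integral_add hint_qt (h.integrableOn_mul_laplacian hΩ hΩb ht hψ),
    ← integral_const_mul]
  refine norm_integral_le_of_norm_le hint_q (ae_restrict_of_forall_mem hΩ.measurableSet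
    fun x hx => ?_)
  rw [← mul_add, norm_mul, norm_of_nonneg (hψ_nonneg x hx), mul_left_comm, norm_eq_abs]
  exact mul_le_mul_of_nonneg_left (h.abs_deriv_add_laplacian_le t ht x hx) (hψ_nonneg x hx)

lemma neg_setIntegral_le_setIntegral_mul_deriv (h : IsNonnegAdjointSolution Ω T A q qt)
    (hΩ : IsOpen Ω) (hΩb : Bornology.IsBounded Ω) (ht : t ∈ Ioo 0 T) {ψ : E → ℝ}
    (hψ : ContDiff ℝ 2 ψ) (hψ_nonneg : ∀ x ∈ Ω, 0 ≤ ψ x) :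
    -∫ x in Ω, (Δ ψ x + A * ψ x) * q (t, x) ∂μ ≤ ∫ x in Ω, ψ x * qt (t, x) ∂μ := by
  have hψ_cont : ContinuousOn ψ (closure Ω) := hψ.continuous.continuousOn
  have hΔψ : ContinuousOn (Δ ψ) (closure Ω) :=
    (continuousOn_laplacian isOpen_univ hψ.contDiffOn).mono (subset_univ _)
  have hq := h.continuousOn_slice (Ioo_subset_Icc_self ht)
  have hint_qΔψ : IntegrableOn (fun x => q (t, x) * Δ ψ x) Ω μ :=
    integrableOn_of_continuousOn_closure hΩb (hq.mul hΔψ)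
  have hint_ψq : IntegrableOn (fun x => ψ x * q (t, x)) Ω μ :=
    integrableOn_of_continuousOn_closure hΩb (hψ_cont.mul hq)
  have hgreen : ∫ x in Ω, ψ x * Δ (fun y => q (t, y)) x ∂μ ≤ ∫ x in Ω, q (t, x) * Δ ψ x ∂μ :=
    setIntegral_mul_laplacian_le hΩ hΩb (h.contDiffOn t ht) hq (h.eq_zero_of_mem_frontier t ht)
      (fun x hx => h.nonneg t (Ioo_subset_Icc_self ht) x (subset_closure hx))
      (fun x hx => h.laplacian_eq_zero_of_eq_zero ht hx) hψ.contDiffOn hψ_nonneg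
      (h.integrableOn_mul_laplacian hΩ hΩb ht hψ_cont) hint_qΔψ
  have hpde := (abs_le.1
    (h.abs_setIntegral_mul_deriv_add_laplacian_le (μ := μ) hΩ hΩb ht hψ_cont hψ_nonneg)).1
  have hsum : ∫ x in Ω, (Δ ψ x + A * ψ x) * q (t, x) ∂μ =
      (∫ x in Ω, q (t, x) * Δ ψ x ∂μ) + A * ∫ x in Ω, ψ x * q (t, x) ∂μ := by
    rw [← integral_const_mul, ← integral_add hint_qΔψ (hint_ψq.const_mul A)]
    simp only [add_mul, mul_assoc, mul_comm (Δ ψ _)]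
  linarith

lemma setIntegral_mul_deriv_le (h : IsNonnegAdjointSolution Ω T A q qt)
    (hΩ : IsOpen Ω) (hΩb : Bornology.IsBounded Ω) (ht : t ∈ Ioo 0 T) {φ : E → ℝ}
    (hφ : ContDiff ℝ 2 φ) (hφ_pos : ∀ x ∈ Ω, 0 < φ x) (hφ₀ : ∀ x ∈ frontier Ω, φ x = 0) :
    ∫ x in Ω, φ x * qt (t, x) ∂μ ≤ ∫ x in Ω, (A * φ x - Δ φ x) * q (t, x) ∂μ := by
  have hφ_cont : ContinuousOn φ (closure Ω) := hφ.continuous.continuousOn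
  have hφ_nonneg : ∀ x ∈ Ω, 0 ≤ φ x := fun x hx => (hφ_pos x hx).le
  have hΔφ : ContinuousOn (Δ φ) (closure Ω) :=
    (continuousOn_laplacian isOpen_univ hφ.contDiffOn).mono (subset_univ _)
  have hq := h.continuousOn_slice (Ioo_subset_Icc_self ht)
  have hint_qΔφ : IntegrableOn (fun x => q (t, x) * Δ φ x) Ω μ :=
    integrableOn_of_continuousOn_closure hΩb (hq.mul hΔφ)
  have hint_φq : IntegrableOn (fun x => φ x * q (t, x)) Ω μ :=
    integrableOn_of_continuousOn_closure hΩb (hφ_cont.mul hq)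
  have hgreen : ∫ x in Ω, q (t, x) * Δ φ x ∂μ ≤ ∫ x in Ω, φ x * Δ (fun y => q (t, y)) x ∂μ :=
    setIntegral_mul_laplacian_le hΩ hΩb hφ.contDiffOn hφ_cont hφ₀ hφ_nonneg
      (fun x hx hφx => absurd hφx (hφ_pos x hx).ne') (h.contDiffOn t ht)
      (fun x hx => h.nonneg t (Ioo_subset_Icc_self ht) x (subset_closure hx)) hint_qΔφ
      (h.integrableOn_mul_laplacian hΩ hΩb ht hφ_cont)
  have hpde := (abs_le.1
    (h.abs_setIntegral_mul_deriv_add_laplacian_le (μ := μ) hΩ hΩb ht hφ_cont hφ_nonneg)).2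
  have hsub : ∫ x in Ω, (A * φ x - Δ φ x) * q (t, x) ∂μ =
      A * (∫ x in Ω, φ x * q (t, x) ∂μ) - ∫ x in Ω, q (t, x) * Δ φ x ∂μ := by
    rw [← integral_const_mul, ← integral_sub (hint_φq.const_mul A) hint_qΔφ]
    simp only [sub_mul, mul_assoc, mul_comm (Δ φ _)]
  linarith

end IsNonnegAdjointSolution

end AdjointSolution

section HeatKernel

variable {E : Type*} [NormedAddCommGroup E] [InnerProductSpace ℝ E]

/-- The Gauss–Weierstrass kernel of the heat equation on `E` at time `τ`, centred at `x₀`. -/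
noncomputable def heatKernel (τ : ℝ) (x₀ x : E) : ℝ :=
  (4 * π * τ) ^ (-(finrank ℝ E / 2 : ℝ)) * exp (-‖x - x₀‖ ^ 2 / (4 * τ))

variable {τ : ℝ} (x₀ x : E)

lemma heatKernel_nonneg (hτ : 0 ≤ τ) : 0 ≤ heatKernel τ x₀ x := by
  unfold heatKernel; positivity

lemma heatKernel_le (hτ : 0 ≤ τ) :
    heatKernel τ x₀ x ≤ (4 * π * τ) ^ (-(finrank ℝ E / 2 : ℝ)) :=
  mul_le_of_le_one_right (by positivity)
    (exp_le_one_iff.2 (div_nonpos_of_nonpos_of_nonneg (by simp) (by positivity)))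

lemma contDiff_heatKernel {n : WithTop ℕ∞} : ContDiff ℝ n (heatKernel τ x₀) := by
  unfold heatKernel
  exact contDiff_const.mul
    ((((contDiff_id.sub contDiff_const).norm_sq ℝ).neg.div_const _).exp)

lemma continuousOn_heatKernel :
    ContinuousOn (fun p : ℝ × E => heatKernel p.1 x₀ p.2) {p | 0 < p.1} := by
  have hne : ∀ p ∈ {p : ℝ × E | 0 < p.1}, 4 * p.1 ≠ 0 := fun p hp =>
    mul_ne_zero four_ne_zero (ne_of_gt hp)
  have hne' : ∀ p ∈ {p : ℝ × E | 0 < p.1}, 4 * π * p.1 ≠ 0 := fun p hp =>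
    (mul_pos (by positivity) hp).ne'
  unfold heatKernel
  exact (ContinuousOn.rpow_const (by fun_prop) fun p hp => .inl (hne' p hp)).mul
    (ContinuousOn.div (by fun_prop) (by fun_prop) hne).rexp

variable [FiniteDimensional ℝ E]

lemma laplacian_heatKernel : Δ (heatKernel τ x₀) x =
    heatKernel τ x₀ x * (‖x - x₀‖ ^ 2 / (4 * τ ^ 2) - finrank ℝ E / (2 * τ)) := by
  set c : ℝ := (4 * π * τ) ^ (-(finrank ℝ E / 2 : ℝ))
  have hderiv (b : ℝ) : deriv (fun s => b * exp (-s / (4 * τ))) =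
      fun s => (-b / (4 * τ)) * exp (-s / (4 * τ)) := by
    ext s
    have := (((hasDerivAt_neg s).div_const (4 * τ)).exp.const_mul b)
    rw [this.deriv]
    ring
  have hcomp := laplacian_comp (φ := fun s => c * exp (-s / (4 * τ)))
    (u := fun y => ‖y - x₀‖ ^ 2) (x := x) (by fun_prop)
    ((contDiff_id.sub contDiff_const).norm_sq ℝ).contDiffAt
  rw [hderiv, hderiv, laplacian_norm_sub_sq, norm_gradient_norm_sub_sq] at hcomp
  refine hcomp.trans ?_
  unfold heatKernel
  ring

lemma hasDerivAt_heatKernel (hτ : 0 < τ) :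
    HasDerivAt (fun τ => heatKernel τ x₀ x) (Δ (heatKernel τ x₀) x) τ := by
  have hlin : HasDerivAt (fun τ : ℝ => 4 * π * τ) (4 * π) τ := by
    simpa using (hasDerivAt_id τ).const_mul (4 * π)
  have hlin' : HasDerivAt (fun τ : ℝ => 4 * τ) 4 τ := by simpa using (hasDerivAt_id τ).const_mul 4
  have hpow := hlin.rpow_const (p := -(finrank ℝ E / 2 : ℝ)) (.inl (by positivity))
  have hexp := (hlin'.fun_inv (by positivity)).const_mul (-‖x - x₀‖ ^ 2) |>.exp
  rw [laplacian_heatKernel]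
  unfold heatKernel
  simp only [div_eq_mul_inv] at hpow hexp ⊢
  convert! hpow.fun_mul hexp using 1
  rw [rpow_sub_one (by positivity)]
  field_simp
  ring

lemma continuousOn_laplacian_heatKernel :
    ContinuousOn (fun p : ℝ × E => Δ (heatKernel p.1 x₀) p.2) {p | 0 < p.1} := by
  simp only [laplacian_heatKernel]
  refine (continuousOn_heatKernel x₀).mul (.sub (.div (by fun_prop) (by fun_prop) fun p hp => ?_)
    (.div (by fun_prop) (by fun_prop) fun p hp => ?_))
  · exact mul_ne_zero four_ne_zero (pow_ne_zero 2 (ne_of_gt hp))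
  · exact mul_ne_zero two_ne_zero (ne_of_gt hp)

variable [MeasurableSpace E] [BorelSpace E]

lemma tendsto_integral_heatKernel_mul {f : E → ℝ} (hf : Integrable f) {x₀ : E}
    (hfx₀ : ContinuousAt f x₀) :
    Tendsto (fun r => ∫ x, heatKernel r x₀ x * f x) (𝓝[>] 0) (𝓝 (f x₀)) := by
  have hr : Tendsto (fun r : ℝ => (4 * π ^ 2 * r)⁻¹) (𝓝[>] 0) atTop := by
    have := tendsto_inv_nhdsGT_zero (𝕜 := ℝ) |>.const_mul_atTop
      (show (0 : ℝ) < (4 * π ^ 2)⁻¹ by positivity)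
    simpa only [mul_inv] using this
  have hmain := (Real.tendsto_integral_gaussian_smul' (f := fun x => (f x : ℂ)) hf.ofReal
    (Complex.continuous_ofReal.continuousAt.comp hfx₀)).comp hr
  have hre := (Complex.continuous_re.tendsto _).comp hmain
  rw [Complex.ofReal_re] at hre
  refine hre.congr' ?_
  filter_upwards [self_mem_nhdsWithin] with r hr
  have hr₀ : (0 : ℝ) < r := hr
  have hkernel (x : E) : ((π * ((4 * π ^ 2 * r)⁻¹ : ℝ) : ℂ) ^ (finrank ℝ E / 2 : ℂ) *
      Complex.exp (-π ^ 2 * ((4 * π ^ 2 * r)⁻¹ : ℝ) * ‖x₀ - x‖ ^ 2)) • (f x : ℂ) =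
      ((heatKernel r x₀ x * f x : ℝ) : ℂ) := by
    have hbase : π * (4 * π ^ 2 * r)⁻¹ = (4 * π * r)⁻¹ := by field_simp
    have hexponent : -π ^ 2 * (4 * π ^ 2 * r)⁻¹ * ‖x₀ - x‖ ^ 2 = -‖x - x₀‖ ^ 2 / (4 * r) := by
      rw [norm_sub_rev]; field_simp
    rw [heatKernel, ← hexponent, rpow_neg (by positivity), ← inv_rpow (by positivity), ← hbase,
      smul_eq_mul]
    push_cast [Complex.ofReal_cpow (show 0 ≤ π * (4 * π ^ 2 * r)⁻¹ by positivity)]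
    rfl
  simp only [Function.comp_apply, hkernel, integral_complex_ofReal, Complex.ofReal_re]

end HeatKernel

section Smoothing

lemma continuousOn_comp_add_fst {X Y : Type*} [TopologicalSpace X] [TopologicalSpace Y]
    {g : ℝ × X → Y} (hg : ContinuousOn g {p | 0 < p.1}) {I : Set ℝ} {r : ℝ}
    (hI : ∀ τ ∈ I, 0 < τ + r) (s : Set X) :
    ContinuousOn (fun p : ℝ × X => g (p.1 + r, p.2)) (I ×ˢ s) :=
  hg.comp (by fun_prop) fun p hp => hI p.1 hp.1

namespace IsNonnegAdjointSolution

variable {E : Type*} [NormedAddCommGroup E] [InnerProductSpace ℝ E] [FiniteDimensional ℝ E]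
  [MeasurableSpace E] [BorelSpace E] {Ω : Set E} {T A t r : ℝ} {q qt : ℝ × E → ℝ} {x₀ : E}

lemma hasDerivAt_setIntegral_heatKernel_mul (h : IsNonnegAdjointSolution Ω T A q qt)
    (hΩ : IsOpen Ω) (hΩb : Bornology.IsBounded Ω) (hr : 0 ≤ r) (ht : t ∈ Ioo 0 T) :
    HasDerivAt (fun τ => ∫ x in Ω, heatKernel (τ + r) x₀ x * q (τ, x))
      ((∫ x in Ω, Δ (heatKernel (t + r) x₀) x * q (t, x)) +
        ∫ x in Ω, heatKernel (t + r) x₀ x * qt (t, x)) t :=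
  have hI : ∀ τ ∈ Ioo 0 T, 0 < τ + r := fun _ hτ => add_pos_of_pos_of_nonneg hτ.1 hr
  h.hasDerivAt_setIntegral_mul hΩ hΩb
    (continuousOn_comp_add_fst (continuousOn_heatKernel x₀) hI _)
    (continuousOn_comp_add_fst (continuousOn_laplacian_heatKernel x₀) hI _)
    (fun τ hτ x _ => (hasDerivAt_heatKernel x₀ x (hI τ hτ)).comp_add_const τ r) ht

lemma neg_mul_setIntegral_heatKernel_le (h : IsNonnegAdjointSolution Ω T A q qt)
    (hΩ : IsOpen Ω) (hΩb : Bornology.IsBounded Ω) (ht : t ∈ Ioo 0 T) {τ : ℝ} (hτ : 0 ≤ τ) :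
    -(A * ∫ x in Ω, heatKernel τ x₀ x * q (t, x)) ≤
      (∫ x in Ω, Δ (heatKernel τ x₀) x * q (t, x)) + ∫ x in Ω, heatKernel τ x₀ x * qt (t, x) := by
  have hker : ContDiff ℝ 2 (heatKernel τ x₀) := contDiff_heatKernel x₀
  have hq := h.continuousOn_slice (Ioo_subset_Icc_self ht)
  have hweak := h.neg_setIntegral_le_setIntegral_mul_deriv (μ := volume) hΩ hΩb ht hker
    (fun x _ => heatKernel_nonneg x₀ x hτ)
  have hint : IntegrableOn (fun x => heatKernel τ x₀ x * q (t, x)) Ω :=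
    integrableOn_of_continuousOn_closure hΩb (hker.continuous.continuousOn.mul hq)
  have hintΔ : IntegrableOn (fun x => Δ (heatKernel τ x₀) x * q (t, x)) Ω :=
    integrableOn_of_continuousOn_closure hΩb
      (((continuousOn_laplacian isOpen_univ hker.contDiffOn).mono (subset_univ _)).mul hq)
  have hsum : ∫ x in Ω, (Δ (heatKernel τ x₀) x + A * heatKernel τ x₀ x) * q (t, x) =
      (∫ x in Ω, Δ (heatKernel τ x₀) x * q (t, x)) +
        A * ∫ x in Ω, heatKernel τ x₀ x * q (t, x) := by
    rw [← integral_const_mul, ← integral_add hintΔ (hint.const_mul A)]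
    simp only [add_mul, mul_assoc]
  linarith

lemma monotoneOn_exp_mul_setIntegral_heatKernel (h : IsNonnegAdjointSolution Ω T A q qt)
    (hΩ : IsOpen Ω) (hΩb : Bornology.IsBounded Ω) (hr : 0 < r) :
    MonotoneOn (fun τ => exp (A * τ) * ∫ x in Ω, heatKernel (τ + r) x₀ x * q (τ, x))
      (Icc 0 T) := by
  have hexp (τ : ℝ) : HasDerivAt (fun τ => exp (A * τ)) (exp (A * τ) * A) τ :=
    ((hasDerivAt_id τ).const_mul A).exp.congr_deriv (by simp)
  have hker : ContinuousOn (fun p : ℝ × E => heatKernel (p.1 + r) x₀ p.2) (Icc 0 T ×ˢ closure Ω) :=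
    continuousOn_comp_add_fst (continuousOn_heatKernel x₀)
      (fun τ hτ => add_pos_of_nonneg_of_pos hτ.1 hr) _
  refine monotoneOn_of_hasDerivWithinAt_nonneg (convex_Icc 0 T) ?_ (fun τ hτ =>
    ((hexp τ).fun_mul (h.hasDerivAt_setIntegral_heatKernel_mul hΩ hΩb hr.le
      (interior_Icc (α := ℝ) ▸ hτ))).hasDerivWithinAt) fun τ hτ => ?_
  · exact (by fun_prop : Continuous fun τ => exp (A * τ)).continuousOn.mul
      (continuousOn_setIntegral_of_isCompact isCompact_Icc hΩb.isCompact_closure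
        hΩ.measurableSet subset_closure (hker.mul h.continuousOn))
  · rw [interior_Icc] at hτ
    have hle := h.neg_mul_setIntegral_heatKernel_le (x₀ := x₀) hΩ hΩb hτ (add_pos hτ.1 hr).le
    rw [mul_assoc, ← mul_add]
    exact mul_nonneg (exp_nonneg _) (neg_le_iff_add_nonneg'.1 hle)

lemma apply_zero_le_mul_setIntegral (h : IsNonnegAdjointSolution Ω T A q qt) (hΩ : IsOpen Ω)
    (hΩb : Bornology.IsBounded Ω) (hx₀ : x₀ ∈ Ω) (ht : t ∈ Ioo 0 T) :
    q (0, x₀) ≤ exp (A * t) * ((4 * π * t) ^ (-(finrank ℝ E / 2 : ℝ)) * ∫ x in Ω, q (t, x)) := by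
  have ht' := Ioo_subset_Icc_self ht
  have h0 : (0 : ℝ) ∈ Icc 0 T := ⟨le_rfl, (ht.1.trans ht.2).le⟩
  have hq₀ := h.continuousOn_slice h0
  have hbound {r : ℝ} (hr : 0 < r) (x : E) :
      heatKernel (t + r) x₀ x ≤ (4 * π * t) ^ (-(finrank ℝ E / 2 : ℝ)) := by
    have ht₀ := ht.1
    refine (heatKernel_le x₀ x (add_pos ht₀ hr).le).trans
      (rpow_le_rpow_of_nonpos (by positivity) ?_ (neg_nonpos.2 (by positivity)))
    gcongr
    linarith
  have hlim : Tendsto (fun r => ∫ x in Ω, heatKernel r x₀ x * q (0, x)) (𝓝[>] 0)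
      (𝓝 (q (0, x₀))) := by
    have hind := tendsto_integral_heatKernel_mul (f := Ω.indicator fun x => q (0, x)) (x₀ := x₀)
      ((integrableOn_of_continuousOn_closure hΩb hq₀).integrable_indicator hΩ.measurableSet)
      (ContinuousAt.congr (hq₀.continuousAt (mem_of_superset (hΩ.mem_nhds hx₀) subset_closure))
        ((eqOn_indicator.eventuallyEq_of_mem (hΩ.mem_nhds hx₀)).symm))
    simpa only [indicator_of_mem hx₀, ← indicator_mul_right,
      integral_indicator hΩ.measurableSet] using hind
  refine le_of_tendsto hlim ?_
  filter_upwards [self_mem_nhdsWithin] with r (hr : 0 < r)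
  calc ∫ x in Ω, heatKernel r x₀ x * q (0, x)
      ≤ exp (A * t) * ∫ x in Ω, heatKernel (t + r) x₀ x * q (t, x) := by
        simpa using h.monotoneOn_exp_mul_setIntegral_heatKernel (x₀ := x₀) hΩ hΩb hr h0 ht' ht.1.le
    _ ≤ exp (A * t) * ∫ x in Ω, (4 * π * t) ^ (-(finrank ℝ E / 2 : ℝ)) * q (t, x) := by
        refine mul_le_mul_of_nonneg_left (setIntegral_mono_on ?_ ?_ hΩ.measurableSet fun x hx => ?_)
          (exp_nonneg _)
        · exact integrableOn_of_continuousOn_closure hΩb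
            ((contDiff_heatKernel (n := 0) x₀).continuous.continuousOn.mul
              (h.continuousOn_slice ht'))
        · exact integrableOn_of_continuousOn_closure hΩb ((h.continuousOn_slice ht').const_mul _)
        · exact mul_le_mul_of_nonneg_right (hbound hr x) (h.nonneg t ht' x (subset_closure hx))
    _ = exp (A * t) * ((4 * π * t) ^ (-(finrank ℝ E / 2 : ℝ)) * ∫ x in Ω, q (t, x)) := by
        rw [integral_const_mul]

end IsNonnegAdjointSolution

end Smoothing

lemma sq_mul_exp_neg_le {S : ℝ} (hS : 0 ≤ S) : S ^ 2 * exp (-S) ≤ 2 := by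
  rw [exp_neg, ← div_eq_mul_inv, div_le_iff₀ (exp_pos S)]
  linarith [quadratic_le_exp_of_nonneg hS]

section CarlemanWeight

variable {E : Type*}

/-- The Carleman weight with profile `θ` and large parameter `S`; it vanishes where `θ` does. It is
used with `S = s / t`, which is singular at `t = 0`. -/
noncomputable def carlemanWeight (θ : E → ℝ) (K S : ℝ) (x : E) : ℝ :=
  exp (-S * (K - θ x)) - exp (-S * K)

variable {Ω ω : Set E} {θ : E → ℝ} {K S s t A : ℝ} {x : E}

lemma hasDerivAt_carlemanWeight (ht : t ≠ 0) :
    HasDerivAt (fun τ => carlemanWeight θ K (s / τ) x)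
      (s / t ^ 2 * ((K - θ x) * exp (-(s / t) * (K - θ x)) - K * exp (-(s / t) * K))) t := by
  have hdiv : HasDerivAt (fun τ => s / τ) (-(s / t ^ 2)) t := by
    simpa [div_eq_mul_inv] using (hasDerivAt_inv ht).const_mul s
  exact ((hdiv.fun_neg.mul_const (K - θ x)).exp.fun_sub
    (hdiv.fun_neg.mul_const K).exp).congr_deriv (by ring)

lemma continuousOn_deriv_carlemanWeight_div [TopologicalSpace E] (hθ : Continuous θ) {U : Set E} :
    ContinuousOn (fun p : ℝ × E => deriv (fun τ => carlemanWeight θ K (s / τ) p.2) p.1)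
      (Ioi 0 ×ˢ U) := by
  refine ContinuousOn.congr (f := fun p : ℝ × E => s / p.1 ^ 2 *
    ((K - θ p.2) * exp (-(s / p.1) * (K - θ p.2)) - K * exp (-(s / p.1) * K))) ?_
    fun p hp => (hasDerivAt_carlemanWeight hp.1.ne').deriv
  have hne (p : ℝ × E) (hp : p ∈ Ioi 0 ×ˢ U) : p.1 ≠ 0 := hp.1.ne'
  fun_prop (disch := simpa using hne)

lemma contDiff_carlemanWeight [NormedAddCommGroup E] [NormedSpace ℝ E] (hθ : ContDiff ℝ 2 θ) :
    ContDiff ℝ 2 (carlemanWeight θ K S) := by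
  unfold carlemanWeight; fun_prop

variable [NormedAddCommGroup E] [InnerProductSpace ℝ E] [FiniteDimensional ℝ E]

/-- A boundary-vanishing profile `θ` whose only almost-critical points in `Ω` lie in `ω`, normalised
so that a single constant `K` controls its size and Laplacian and is dominated by its gradient. -/
structure IsCarlemanProfile (Ω ω : Set E) (θ : E → ℝ) (K : ℝ) : Prop where
  contDiff : ContDiff ℝ 2 θ
  pos : ∀ x ∈ Ω, 0 < θ x
  eq_zero_of_mem_frontier : ∀ x ∈ frontier Ω, θ x = 0
  add_one_le : ∀ x ∈ closure Ω, θ x + 1 ≤ K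
  abs_laplacian_le : ∀ x ∈ Ω, |Δ θ x| ≤ K
  le_norm_gradient_sq : ∀ x ∈ Ω \ ω, 4 * K ≤ ‖∇ θ x‖ ^ 2

lemma laplacian_carlemanWeight (hθ : ContDiff ℝ 2 θ) :
    Δ (carlemanWeight θ K S) x =
      exp (-S * (K - θ x)) * (S * Δ θ x + S ^ 2 * ‖∇ θ x‖ ^ 2) := by
  have hd (b : ℝ) (r : ℝ) : HasDerivAt (fun r => b * exp (-S * (K - r)))
      (b * S * exp (-S * (K - r))) r :=
    ((((hasDerivAt_id r).const_sub K).const_mul (-S)).exp.const_mul b).congr_deriv (by simp; ring)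
  have hcomp := laplacian_comp (φ := fun r => 1 * exp (-S * (K - r)) - exp (-S * K)) (x := x)
    (by fun_prop) hθ.contDiffAt
  have hderiv : deriv (fun r => 1 * exp (-S * (K - r)) - exp (-S * K)) =
      fun r => 1 * S * exp (-S * (K - r)) := funext fun r => ((hd 1 r).sub_const _).deriv
  rw [hderiv, (hd (1 * S) (θ x)).deriv] at hcomp
  simp only [one_mul] at hcomp
  exact hcomp.trans (by ring)

namespace IsCarlemanProfile

lemma nonneg (hθ : IsCarlemanProfile Ω ω θ K) (hx : x ∈ closure Ω) : 0 ≤ θ x := by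
  by_cases hxΩ : x ∈ Ω
  · exact (hθ.pos x hxΩ).le
  · exact (hθ.eq_zero_of_mem_frontier x ⟨hx, fun h => hxΩ (interior_subset h)⟩).ge

lemma carlemanWeight_pos (hθ : IsCarlemanProfile Ω ω θ K) (hS : 0 < S) (hx : x ∈ Ω) :
    0 < carlemanWeight θ K S x := by
  have := mul_pos hS (hθ.pos x hx)
  exact sub_pos.2 (exp_lt_exp.2 (by linarith))

lemma carlemanWeight_nonneg (hθ : IsCarlemanProfile Ω ω θ K) (hS : 0 ≤ S) (hx : x ∈ closure Ω) :
    0 ≤ carlemanWeight θ K S x := by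
  have := mul_nonneg hS (hθ.nonneg hx)
  exact sub_nonneg.2 (exp_le_exp.2 (by linarith))

lemma carlemanWeight_eq_zero (hθ : IsCarlemanProfile Ω ω θ K) (hx : x ∈ frontier Ω) :
    carlemanWeight θ K S x = 0 := by
  simp [carlemanWeight, hθ.eq_zero_of_mem_frontier x hx]

lemma exp_neg_mul_sub_le (hθ : IsCarlemanProfile Ω ω θ K) (hS : 0 ≤ S) (hx : x ∈ closure Ω) :
    exp (-S * (K - θ x)) ≤ exp (-S) := by
  have := mul_nonneg hS (sub_nonneg.2 (hθ.add_one_le x hx))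
  exact exp_le_exp.2 (by linarith)

lemma carlemanWeight_div_le (hθ : IsCarlemanProfile Ω ω θ K) (hs : 0 < s) (ht : 0 ≤ t)
    (hx : x ∈ closure Ω) : carlemanWeight θ K (s / t) x ≤ t / s := by
  rcases ht.eq_or_lt with rfl | ht
  · simp [carlemanWeight]
  · calc carlemanWeight θ K (s / t) x ≤ exp (-(s / t) * (K - θ x)) :=
          sub_le_self _ (exp_nonneg _)
      _ ≤ exp (-(s / t)) := hθ.exp_neg_mul_sub_le (by positivity) hx
      _ ≤ (s / t)⁻¹ := by
          rw [exp_neg]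
          exact inv_anti₀ (by positivity) (by linarith [add_one_le_exp (s / t)])
      _ = t / s := inv_div s t

lemma continuousOn_carlemanWeight_div (hθ : IsCarlemanProfile Ω ω θ K) (hs : 0 < s) {T : ℝ} :
    ContinuousOn (fun p : ℝ × E => carlemanWeight θ K (s / p.1) p.2) (Icc 0 T ×ˢ closure Ω) := by
  rintro ⟨t, x⟩ ⟨ht, hx⟩
  have hθc := hθ.contDiff.continuous
  rcases ht.1.eq_or_lt with rfl | ht₀
  -- At `t = 0` the junk value `s / 0 = 0` makes the weight vanish, which is also its limit.
  · have hlim : Tendsto (fun p : ℝ × E => p.1 / s) (𝓝[Icc 0 T ×ˢ closure Ω] (0, x)) (𝓝 0) := by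
      have : Continuous fun p : ℝ × E => p.1 / s := by fun_prop
      exact (this.tendsto' (0, x) 0 (by simp)).mono_left nhdsWithin_le_nhds
    have hzero : carlemanWeight θ K (s / (0 : ℝ)) x = 0 := by simp [carlemanWeight]
    rw [ContinuousWithinAt, hzero]
    refine squeeze_zero' ?_ ?_ hlim <;> filter_upwards [self_mem_nhdsWithin] with p hp
    · exact hθ.carlemanWeight_nonneg (div_nonneg hs.le hp.1.1) hp.2
    · exact hθ.carlemanWeight_div_le hs hp.1.1 hp.2
  · have hdiv : ContinuousAt (fun p : ℝ × E => s / p.1) (t, x) :=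
      continuousAt_const.div continuousAt_fst ht₀.ne'
    unfold carlemanWeight
    exact (ContinuousAt.sub (by fun_prop) (by fun_prop)).continuousWithinAt

lemma deriv_add_sub_laplacian_carlemanWeight_le_mul (hθ : IsCarlemanProfile Ω ω θ K) (hs : 1 ≤ s)
    (ht : 0 < t) (hst : 1 ≤ s / t) (hA : A ≤ (s / t) ^ 2) (hx : x ∈ Ω) :
    deriv (fun τ => carlemanWeight θ K (s / τ) x) t + A * carlemanWeight θ K (s / t) x
        - Δ (carlemanWeight θ K (s / t)) x ≤
      (s / t) ^ 2 * exp (-(s / t) * (K - θ x)) * (3 * K - ‖∇ θ x‖ ^ 2) := by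
  have hθ₀ := hθ.nonneg (subset_closure hx)
  have hK : 1 ≤ K := by linarith [hθ.add_one_le x (subset_closure hx)]
  rw [(hasDerivAt_carlemanWeight ht.ne').deriv, laplacian_carlemanWeight hθ.contDiff,
    carlemanWeight]
  have hs_sq : s / t ^ 2 ≤ (s / t) ^ 2 := by
    rw [div_pow]; gcongr; nlinarith
  set S := s / t
  set w := exp (-S * (K - θ x))
  have hw : exp (-S * K) ≤ w := exp_le_exp.2 (by nlinarith)
  have hw₀ : 0 < exp (-S * K) := exp_pos _
  have htime : s / t ^ 2 * ((K - θ x) * w - K * exp (-S * K)) ≤ S ^ 2 * (K * w) :=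
    calc s / t ^ 2 * ((K - θ x) * w - K * exp (-S * K)) ≤ s / t ^ 2 * (K * w) := by
          gcongr; nlinarith
      _ ≤ S ^ 2 * (K * w) := by gcongr
  have hpot : A * (w - exp (-S * K)) ≤ S ^ 2 * (K * w) :=
    mul_le_mul hA (by nlinarith) (by linarith) (by positivity)
  have hlap : S * -Δ θ x * w ≤ S ^ 2 * K * w :=
    calc S * -Δ θ x * w ≤ S * K * w := by
          gcongr; exact neg_le.1 (abs_le.1 (hθ.abs_laplacian_le x hx)).1
      _ ≤ S ^ 2 * K * w := by gcongr; exact le_self_pow₀ hst two_ne_zero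
  linarith

lemma deriv_add_sub_laplacian_carlemanWeight_le (hθ : IsCarlemanProfile Ω ω θ K) (hs : 1 ≤ s)
    (ht : 0 < t) (hst : 1 ≤ s / t) (hA : A ≤ (s / t) ^ 2) (hx : x ∈ Ω) :
    deriv (fun τ => carlemanWeight θ K (s / τ) x) t + A * carlemanWeight θ K (s / t) x
        - Δ (carlemanWeight θ K (s / t)) x ≤
      ω.indicator (fun _ => 7 * K) x - K * exp (-(s / t) * K) := by
  have hθ₀ := hθ.nonneg (subset_closure hx)
  have hK : 1 ≤ K := by linarith [hθ.add_one_le x (subset_closure hx)]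
  refine (hθ.deriv_add_sub_laplacian_carlemanWeight_le_mul hs ht hst hA hx).trans ?_
  set S := s / t
  set w := exp (-S * (K - θ x))
  by_cases hxω : x ∈ ω
  · have hSw : S ^ 2 * w ≤ 2 :=
      calc S ^ 2 * w ≤ S ^ 2 * exp (-S) := by
            gcongr; exact hθ.exp_neg_mul_sub_le (by positivity) (subset_closure hx)
        _ ≤ 2 := sq_mul_exp_neg_le (by positivity)
    have hexp : exp (-S * K) ≤ 1 := exp_le_one_iff.2 (by nlinarith)
    have hgrad : 0 ≤ S ^ 2 * w * ‖∇ θ x‖ ^ 2 := by positivity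
    simp only [indicator_of_mem hxω]
    nlinarith
  · have hgrad := hθ.le_norm_gradient_sq x ⟨hx, hxω⟩
    have hSw : exp (-S * K) ≤ S ^ 2 * w :=
      calc exp (-S * K) ≤ w := exp_le_exp.2 (by nlinarith)
        _ ≤ S ^ 2 * w := le_mul_of_one_le_left (exp_nonneg _) (one_le_pow₀ hst)
    have hgap := mul_le_mul_of_nonneg_left hgrad (show 0 ≤ S ^ 2 * w by positivity)
    simp only [indicator_of_notMem hxω]
    nlinarith

end IsCarlemanProfile

end CarlemanWeight

section Profile

variable {E : Type*} [NormedAddCommGroup E] [InnerProductSpace ℝ E] [FiniteDimensional ℝ E]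
  {Ω ω : Set E}

lemma exists_isCarlemanProfile (hΩb : Bornology.IsBounded Ω) {η : E → ℝ} (hη : ContDiff ℝ 2 η)
    (hη_pos : ∀ x ∈ Ω, 0 < η x) (hη₀ : ∀ x ∈ frontier Ω, η x = 0)
    (hη_grad : ∀ x ∈ closure (Ω \ ω), 0 < ‖∇ η x‖) :
    ∃ K > 0, ∃ θ, IsCarlemanProfile Ω ω θ K := by
  have hΔη : Continuous (Δ η) :=
    continuousOn_univ.1 (continuousOn_laplacian isOpen_univ hη.contDiffOn)
  have hgrad : Continuous fun x => ‖∇ η x‖ ^ 2 :=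
    ((toDual ℝ E).symm.continuous.comp (hη.continuous_fderiv two_ne_zero)).norm.pow 2
  obtain ⟨M, hM⟩ := hΩb.isCompact_closure.exists_bound_of_continuousOn hη.continuous.continuousOn
  obtain ⟨M', hM'⟩ := hΩb.isCompact_closure.exists_bound_of_continuousOn hΔη.continuousOn
  obtain ⟨c, hc, hcη⟩ := (hΩb.subset sdiff_subset).isCompact_closure.exists_forall_le'
    hgrad.continuousOn (a := 0) fun x hx => pow_pos (hη_grad x hx) 2
  set K := max 1 (max (M + 1) M')
  set l := max 1 (4 * K / c)
  have hl : 1 ≤ l := le_max_left _ _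
  have hl₀ : 0 < l := one_pos.trans_le hl
  have hK : 1 ≤ K := le_max_left _ _
  have hMK : M + 1 ≤ K := (le_max_left _ _).trans (le_max_right _ _)
  have hMK' : M' ≤ K := (le_max_right _ _).trans (le_max_right _ _)
  have hlK : 4 * K ≤ l * c := (div_le_iff₀ hc).1 (le_max_right _ _)
  -- Under `θ = l η` the squared gradient scales like `l ^ 2`, size and Laplacian only like `l`.
  refine ⟨l * K, by positivity, l • η, hη.const_smul l, fun x hx => mul_pos hl₀ (hη_pos x hx),
    fun x hx => by simp [hη₀ x hx], fun x hx => ?_, fun x hx => ?_, fun x hx => ?_⟩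
  · have hη_le := (abs_le.1 (hM x hx)).2
    simp only [Pi.smul_apply, smul_eq_mul]
    nlinarith
  · rw [laplacian_smul l hη.contDiffAt, smul_eq_mul, abs_mul, abs_of_pos hl₀]
    gcongr
    exact (hM' x (subset_closure hx)).trans hMK'
  · have hsmul : ∇ (l • η) x = l • ∇ η x := by
      simp [gradient, fderiv_const_smul (hη.differentiable two_ne_zero x)]
    rw [hsmul, norm_smul, mul_pow, norm_of_nonneg hl₀.le]
    calc 4 * (l * K) = l * (4 * K) := by ring
      _ ≤ l * (l * c) := by gcongr l * ?_
      _ ≤ l * (l * ‖∇ η x‖ ^ 2) := by gcongr; exact hcη x (subset_closure hx)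
      _ = l ^ 2 * ‖∇ η x‖ ^ 2 := by ring

end Profile

lemma mul_sub_le_integral_of_deriv_le {J g : ℝ → ℝ} {a b c κ : ℝ} (hca : c ≤ a) (hab : a ≤ b)
    (hJ : ContinuousOn J (Icc c b)) (hJ' : ∀ t ∈ Ioo c b, DifferentiableAt ℝ J t)
    (hg : IntegrableOn g (Icc c b)) (hle : ∀ t ∈ Ioo c a, deriv J t ≤ g t)
    (hle_sub : ∀ t ∈ Ioo a b, deriv J t ≤ g t - κ) :
    J b - J c + κ * (b - a) ≤ ∫ t in c..b, g t := by
  have hca_sub : Icc c a ⊆ Icc c b := Icc_subset_Icc_right hab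
  have hab_sub : Icc a b ⊆ Icc c b := Icc_subset_Icc_left hca
  have hg_ca : IntervalIntegrable g volume c a :=
    (intervalIntegrable_iff_integrableOn_Icc_of_le hca).2 (hg.mono_set hca_sub)
  have hg_ab : IntervalIntegrable g volume a b :=
    (intervalIntegrable_iff_integrableOn_Icc_of_le hab).2 (hg.mono_set hab_sub)
  have hfirst := intervalIntegral.sub_le_integral_of_hasDeriv_right_of_le hca (hJ.mono hca_sub)
    (fun t ht => (hJ' t (Ioo_subset_Ioo_right hab ht)).hasDerivAt.hasDerivWithinAt)
    (hg.mono_set hca_sub) hle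
  have hsecond := intervalIntegral.sub_le_integral_of_hasDeriv_right_of_le hab (hJ.mono hab_sub)
    (fun t ht => (hJ' t (Ioo_subset_Ioo_left hca ht)).hasDerivAt.hasDerivWithinAt)
    (φ := fun t => g t - κ) ((hg.mono_set hab_sub).sub (integrableOn_const (by simp))) hle_sub
  rw [← intervalIntegral.integral_add_adjacent_intervals hg_ca hg_ab]
  rw [intervalIntegral.integral_sub hg_ab intervalIntegrable_const,
    intervalIntegral.integral_const, smul_eq_mul] at hsecond
  linarith

section CarlemanEnergy

variable {E : Type*} [NormedAddCommGroup E] [InnerProductSpace ℝ E] [FiniteDimensional ℝ E]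
  [MeasurableSpace E] [BorelSpace E] {μ : Measure E} [μ.IsAddHaarMeasure]
  {Ω ω : Set E} {T A R s t K : ℝ} {q qt : ℝ × E → ℝ} {θ : E → ℝ}

namespace IsNonnegAdjointSolution

lemma setIntegral_mul_add_setIntegral_mul_deriv_le (h : IsNonnegAdjointSolution Ω T A q qt)
    (hΩ : IsOpen Ω) (hΩb : Bornology.IsBounded Ω) (hω : MeasurableSet ω) (hωΩ : ω ⊆ Ω)
    (ht : t ∈ Ioo 0 T) {φ φt : E → ℝ} (hφ : ContDiff ℝ 2 φ) (hφ_pos : ∀ x ∈ Ω, 0 < φ x)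
    (hφ₀ : ∀ x ∈ frontier Ω, φ x = 0) (hφt : ContinuousOn φt (closure Ω)) {α β : ℝ}
    (hsub : ∀ x ∈ Ω, φt x + A * φ x - Δ φ x ≤ ω.indicator (fun _ => α) x - β) :
    (∫ x in Ω, φt x * q (t, x) ∂μ) + ∫ x in Ω, φ x * qt (t, x) ∂μ ≤
      α * (∫ x in ω, q (t, x) ∂μ) - β * ∫ x in Ω, q (t, x) ∂μ := by
  have ht' := Ioo_subset_Icc_self ht
  have hq := h.continuousOn_slice ht'
  have hΔφ : ContinuousOn (Δ φ) (closure Ω) :=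
    (continuousOn_laplacian isOpen_univ hφ.contDiffOn).mono (subset_univ _)
  have hint_q : IntegrableOn (fun x => q (t, x)) Ω μ := integrableOn_of_continuousOn_closure hΩb hq
  have hint_φt := integrableOn_of_continuousOn_closure (μ := μ) hΩb (hφt.fun_mul hq)
  have hint_φ := integrableOn_of_continuousOn_closure (μ := μ) hΩb
    (((hφ.continuous.continuousOn.const_mul A).fun_sub hΔφ).fun_mul hq)
  have hint_ω : IntegrableOn (ω.indicator fun x => α * q (t, x)) Ω μ :=
    (hint_q.const_mul α).indicator hω
  refine (add_le_add le_rfl (h.setIntegral_mul_deriv_le hΩ hΩb ht hφ hφ_pos hφ₀)).trans ?_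
  rw [← integral_add hint_φt hint_φ]
  calc ∫ x in Ω, (φt x * q (t, x) + (A * φ x - Δ φ x) * q (t, x)) ∂μ
      ≤ ∫ x in Ω, (ω.indicator (fun x => α * q (t, x)) x - β * q (t, x)) ∂μ := by
        refine setIntegral_mono_on (hint_φt.add hint_φ) (hint_ω.sub (hint_q.const_mul _))
          hΩ.measurableSet fun x hx => ?_
        have hmul := mul_le_mul_of_nonneg_right (hsub x hx) (h.nonneg t ht' x (subset_closure hx))
        rw [indicator_mul_left]
        linarith
    _ = α * (∫ x in ω, q (t, x) ∂μ) - β * ∫ x in Ω, q (t, x) ∂μ := by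
        rw [integral_sub hint_ω (hint_q.const_mul _), setIntegral_indicator hω,
          inter_eq_right.2 hωΩ, integral_const_mul, integral_const_mul]

lemma hasDerivAt_setIntegral_carlemanWeight_mul (h : IsNonnegAdjointSolution Ω T A q qt)
    (hθ : IsCarlemanProfile Ω ω θ K) (hΩ : IsOpen Ω) (hΩb : Bornology.IsBounded Ω)
    (hs : 0 < s) (ht : t ∈ Ioo 0 T) :
    HasDerivAt (fun τ => ∫ x in Ω, carlemanWeight θ K (s / τ) x * q (τ, x) ∂μ)
      ((∫ x in Ω, deriv (fun τ => carlemanWeight θ K (s / τ) x) t * q (t, x) ∂μ) +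
        ∫ x in Ω, carlemanWeight θ K (s / t) x * qt (t, x) ∂μ) t :=
  h.hasDerivAt_setIntegral_mul hΩ hΩb
    (ψ := fun p => carlemanWeight θ K (s / p.1) p.2)
    (ψt := fun p => deriv (fun τ => carlemanWeight θ K (s / τ) p.2) p.1)
    ((hθ.continuousOn_carlemanWeight_div hs).mono (prod_mono_left Ioo_subset_Icc_self))
    ((continuousOn_deriv_carlemanWeight_div hθ.contDiff.continuous).mono
      (prod_mono_left Ioo_subset_Ioi_self))
    (fun _ hτ _ _ => (hasDerivAt_carlemanWeight hτ.1.ne').differentiableAt.hasDerivAt) ht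

lemma deriv_setIntegral_carlemanWeight_mul_le (h : IsNonnegAdjointSolution Ω T A q qt)
    (hθ : IsCarlemanProfile Ω ω θ K) (hΩ : IsOpen Ω) (hΩb : Bornology.IsBounded Ω)
    (hω : MeasurableSet ω) (hωΩ : ω ⊆ Ω) (hR : 1 ≤ R) (hRT : 1 ≤ R * T) (hAR : A ≤ R ^ 2)
    (ht : t ∈ Ioo 0 T) :
    deriv (fun τ => ∫ x in Ω, carlemanWeight θ K (R * T / τ) x * q (τ, x) ∂μ) t ≤
      7 * K * (∫ x in ω, q (t, x) ∂μ) -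
        K * (exp (-(R * T / t) * K) * ∫ x in Ω, q (t, x) ∂μ) := by
  have hR_le : R ≤ R * T / t := by
    rw [le_div_iff₀ ht.1]; gcongr; exact ht.2.le
  rw [← mul_assoc K,
    (h.hasDerivAt_setIntegral_carlemanWeight_mul hθ hΩ hΩb (one_pos.trans_le hRT) ht).deriv]
  exact h.setIntegral_mul_add_setIntegral_mul_deriv_le hΩ hΩb hω hωΩ ht
    (contDiff_carlemanWeight hθ.contDiff)
    (fun _ hx => hθ.carlemanWeight_pos (one_pos.trans_le (hR.trans hR_le)) hx)
    (fun _ hx => hθ.carlemanWeight_eq_zero hx)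
    (continuousOn_comp_prodMk_left (continuousOn_deriv_carlemanWeight_div hθ.contDiff.continuous)
      (mem_Ioi.2 ht.1))
    fun _ hx => hθ.deriv_add_sub_laplacian_carlemanWeight_le hRT ht.1 (hR.trans hR_le)
      (hAR.trans (by gcongr)) hx

end IsNonnegAdjointSolution

end CarlemanEnergy

section Observability

lemma rpow_neg_half_le_exp_div {n t T : ℝ} (hn : 0 ≤ n) (hT : 0 < T) (ht : T / 2 ≤ t) :
    (4 * π * t) ^ (-(n / 2)) ≤ exp (n / T) := by
  have ht₀ : 0 < t := (half_pos hT).trans_le ht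
  have hinv : (4 * π * t)⁻¹ ≤ 2 / T := by
    rw [← inv_div]
    exact inv_anti₀ (half_pos hT) (by nlinarith [pi_gt_three])
  have hlog : -log (4 * π * t) ≤ 2 / T := by
    rw [← log_inv]
    exact (log_le_self (by positivity)).trans hinv
  rw [rpow_def_of_pos (by positivity)]
  refine exp_le_exp.2 ?_
  calc log (4 * π * t) * -(n / 2) = -log (4 * π * t) * (n / 2) := by ring
    _ ≤ 2 / T * (n / 2) := by gcongr
    _ = n / T := by ring

variable {E : Type*} [NormedAddCommGroup E] [InnerProductSpace ℝ E] [FiniteDimensional ℝ E]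
  [MeasurableSpace E] [BorelSpace E] {Ω ω : Set E} {T A t K R : ℝ} {q qt : ℝ × E → ℝ} {θ : E → ℝ}
  {x₀ : E}

namespace IsNonnegAdjointSolution

lemma setIntegral_nonneg (h : IsNonnegAdjointSolution Ω T A q qt) {s : Set E}
    (hs : MeasurableSet s) (hsΩ : s ⊆ Ω) (ht : t ∈ Icc 0 T) : 0 ≤ ∫ x in s, q (t, x) :=
  MeasureTheory.setIntegral_nonneg hs fun x hx => h.nonneg t ht x (subset_closure (hsΩ hx))

lemma exp_neg_mul_apply_zero_le_setIntegral (h : IsNonnegAdjointSolution Ω T A q qt)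
    (hA : 0 ≤ A) (hΩ : IsOpen Ω) (hΩb : Bornology.IsBounded Ω) (hx₀ : x₀ ∈ Ω)
    (ht : t ∈ Ioo (T / 2) T) :
    exp (-(A * T + finrank ℝ E / T)) * q (0, x₀) ≤ ∫ x in Ω, q (t, x) := by
  have hT : 0 < T := by linarith [ht.1, ht.2]
  have ht₀ : t ∈ Ioo 0 T := ⟨(half_pos hT).trans ht.1, ht.2⟩
  have hmass := h.setIntegral_nonneg hΩ.measurableSet subset_rfl (Ioo_subset_Icc_self ht₀)
  rw [exp_neg, inv_mul_le_iff₀ (exp_pos _), exp_add, mul_assoc]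
  refine (h.apply_zero_le_mul_setIntegral hΩ hΩb hx₀ ht₀).trans ?_
  gcongr
  · exact mul_nonneg (rpow_nonneg (by have := ht₀.1; positivity) _) hmass
  · exact ht.2.le
  · exact rpow_neg_half_le_exp_div (Nat.cast_nonneg _) hT ht.1.le

lemma exp_neg_mul_apply_zero_le_exp_mul_setIntegral (h : IsNonnegAdjointSolution Ω T A q qt)
    (hA : 0 ≤ A) (hΩ : IsOpen Ω) (hΩb : Bornology.IsBounded Ω) (hx₀ : x₀ ∈ Ω) (hK : 0 ≤ K)
    (hR : 0 ≤ R) (ht : t ∈ Ioo (T / 2) T) :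
    exp (-(2 * K * R + (A * T + finrank ℝ E / T))) * q (0, x₀) ≤
      exp (-(R * T / t) * K) * ∫ x in Ω, q (t, x) := by
  have hT : 0 < T := by linarith [ht.1, ht.2]
  have hRt : R * T / t ≤ 2 * R := by
    rw [div_le_iff₀ ((half_pos hT).trans ht.1)]; nlinarith [ht.1]
  have hq₀ : 0 ≤ q (0, x₀) := h.nonneg 0 ⟨le_rfl, hT.le⟩ x₀ (subset_closure hx₀)
  rw [neg_add, exp_add, mul_assoc]
  exact mul_le_mul (exp_le_exp.2 (by nlinarith))
    (h.exp_neg_mul_apply_zero_le_setIntegral hA hΩ hΩb hx₀ ht) (by positivity) (exp_nonneg _)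

lemma apply_zero_mul_le (h : IsNonnegAdjointSolution Ω T A q qt)
    (hθ : IsCarlemanProfile Ω ω θ K) (hK : 0 < K) (hT : 0 < T) (hA : 0 ≤ A) (hΩ : IsOpen Ω)
    (hΩb : Bornology.IsBounded Ω) (hω : MeasurableSet ω) (hωΩ : ω ⊆ Ω) (hx₀ : x₀ ∈ Ω)
    (hR : 1 ≤ R) (hRT : 1 ≤ R * T) (hAR : A ≤ R ^ 2) :
    q (0, x₀) * T ≤ 14 * exp (2 * K * R + (A * T + finrank ℝ E / T)) *
      ∫ t in Ioo 0 T, ∫ x in ω, q (t, x) := by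
  set F := 2 * K * R + (A * T + finrank ℝ E / T)
  set J := fun t => ∫ x in Ω, carlemanWeight θ K (R * T / t) x * q (t, x) with hJ_def
  have hs : 0 < R * T := by positivity
  have hderiv {t : ℝ} (ht : t ∈ Ioo 0 T) :=
    h.deriv_setIntegral_carlemanWeight_mul_le (μ := volume) hθ hΩ hΩb hω hωΩ hR hRT hAR ht
  have hode : J T - J 0 + K * (exp (-F) * q (0, x₀)) * (T - T / 2) ≤
      ∫ t in (0)..T, 7 * K * ∫ x in ω, q (t, x) := by
    refine mul_sub_le_integral_of_deriv_le (half_pos hT).le (half_lt_self hT).le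
      (continuousOn_setIntegral_of_isCompact isCompact_Icc hΩb.isCompact_closure hΩ.measurableSet
        subset_closure ((hθ.continuousOn_carlemanWeight_div hs).mul h.continuousOn))
      (fun t ht => (h.hasDerivAt_setIntegral_carlemanWeight_mul hθ hΩ hΩb hs ht).differentiableAt)
      (((continuousOn_setIntegral_of_isCompact isCompact_Icc hΩb.isCompact_closure hω
        (hωΩ.trans subset_closure) h.continuousOn).const_mul (7 * K)).integrableOn_compact
        isCompact_Icc) (fun t ht => ?_) fun t ht => ?_
    · have ht' : t ∈ Ioo 0 T := ⟨ht.1, ht.2.trans (half_lt_self hT)⟩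
      have hmass := h.setIntegral_nonneg hΩ.measurableSet subset_rfl (Ioo_subset_Icc_self ht')
      exact (hderiv ht').trans (sub_le_self _ (by positivity))
    · refine (hderiv ⟨(half_pos hT).trans ht.1, ht.2⟩).trans (sub_le_sub_left ?_ _)
      exact mul_le_mul_of_nonneg_left (h.exp_neg_mul_apply_zero_le_exp_mul_setIntegral hA hΩ hΩb
        hx₀ hK.le (zero_le_one.trans hR) ht) hK.le
  have hJ₀ : J 0 = 0 := by simp [hJ_def, carlemanWeight]
  have hJT : 0 ≤ J T := MeasureTheory.setIntegral_nonneg hΩ.measurableSet fun x hx => mul_nonneg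
    (hθ.carlemanWeight_nonneg (by positivity) (subset_closure hx))
    (h.nonneg T ⟨hT.le, le_rfl⟩ x (subset_closure hx))
  rw [intervalIntegral.integral_of_le hT.le, integral_Ioc_eq_integral_Ioo,
    integral_const_mul, exp_neg] at hode
  rw [mul_assoc 14, mul_left_comm, ← inv_mul_le_iff₀ (exp_pos F)]
  refine le_of_mul_le_mul_left ?_ hK
  linarith

lemma apply_zero_le (h : IsNonnegAdjointSolution Ω T A q qt)
    (hθ : IsCarlemanProfile Ω ω θ K) (hK : 0 < K) (hT : 0 < T) (hA : 0 ≤ A) (hΩ : IsOpen Ω)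
    (hΩb : Bornology.IsBounded Ω) (hω : MeasurableSet ω) (hωΩ : ω ⊆ Ω) (hx₀ : x₀ ∈ Ω) :
    q (0, x₀) ≤ exp ((2 * K + (finrank ℝ E : ℝ) + 14) * (1 + 1 / T + T * A + √A)) *
      ∫ t in Ioo 0 T, ∫ x in ω, q (t, x) := by
  set P := ∫ t in Ioo 0 T, ∫ x in ω, q (t, x)
  have hP : 0 ≤ P := MeasureTheory.setIntegral_nonneg measurableSet_Ioo fun t ht =>
    h.setIntegral_nonneg hω hωΩ (Ioo_subset_Icc_self ht)
  set n : ℝ := (finrank ℝ E : ℝ)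
  set R := 1 / T + 1 + √A with hR_def
  have hn : 0 ≤ n := Nat.cast_nonneg _
  have hT_inv : 0 < 1 / T := by positivity
  have hsqrt : 0 ≤ √A := sqrt_nonneg A
  have hR : 1 ≤ R := by linarith
  have hRT : 1 ≤ R * T := by rw [← div_le_iff₀ hT]; linarith
  have hAR : A ≤ R ^ 2 := (sq_sqrt hA).ge.trans (by gcongr; linarith)
  have hTA : 0 ≤ T * A := by positivity
  have hmul := h.apply_zero_mul_le hθ hK hT hA hΩ hΩb hω hωΩ hx₀ hR hRT hAR
  calc q (0, x₀) ≤ 14 * exp (2 * K * R + (A * T + n / T)) * P / T := (le_div_iff₀ hT).2 hmul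
    _ = 14 * (1 / T) * exp (2 * K * R + (A * T + n / T)) * P := by ring
    _ ≤ exp 14 * exp (1 / T) * exp (2 * K * R + (A * T + n / T)) * P := by
        gcongr
        · linarith [add_one_le_exp (14 : ℝ)]
        · linarith [add_one_le_exp (1 / T)]
    _ ≤ exp ((2 * K + n + 14) * (1 + 1 / T + T * A + √A)) * P := by
        rw [← exp_add, ← exp_add]
        gcongr
        rw [div_eq_mul_one_div n]
        nlinarith [mul_nonneg hK.le hTA, mul_nonneg hn hTA, mul_nonneg hn hsqrt]

end IsNonnegAdjointSolution

theorem observability_L2_L1_dirichlet_general (hΩ : IsOpen Ω) (hΩb : Bornology.IsBounded Ω)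
    (hω : MeasurableSet ω) (hωΩ : ω ⊆ Ω) {η : E → ℝ} (hη : ContDiff ℝ 2 η)
    (hη_pos : ∀ x ∈ Ω, 0 < η x) (hη₀ : ∀ x ∈ frontier Ω, η x = 0)
    (hη_grad : ∀ x ∈ closure (Ω \ ω), 0 < ‖∇ η x‖) :
    ∃ C > 0, ∀ T > 0, ∀ A ≥ 0, ∀ q qt : ℝ × E → ℝ, IsNonnegAdjointSolution Ω T A q qt →
      ∫ x in Ω, q (0, x) ^ 2 ≤ exp (C * (1 + 1 / T + T * A + √A)) *
        (∫ t in Ioo 0 T, ∫ x in ω, q (t, x)) ^ 2 := by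
  obtain ⟨K, hK, θ, hθ⟩ := exists_isCarlemanProfile hΩb hη hη_pos hη₀ hη_grad
  set L := 2 * K + (finrank ℝ E : ℝ) + 14
  refine ⟨volume.real Ω + 2 * L, by positivity, fun T hT A hA q qt h => ?_⟩
  set P := ∫ t in Ioo 0 T, ∫ x in ω, q (t, x)
  set X := 1 + 1 / T + T * A + √A with hX_def
  have hX : 1 ≤ X := by
    have : 0 ≤ 1 / T + T * A + √A := by positivity
    rw [hX_def]
    linarith
  have h0 : (0 : ℝ) ∈ Icc 0 T := ⟨le_rfl, hT.le⟩
  have hsq (x : E) (hx : x ∈ Ω) : ‖q (0, x) ^ 2‖ ≤ (exp (L * X) * P) ^ 2 := by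
    have hq₀ := h.nonneg 0 h0 x (subset_closure hx)
    rw [norm_of_nonneg (sq_nonneg _)]
    gcongr
    exact h.apply_zero_le hθ hK hT hA hΩ hΩb hω hωΩ hx
  calc ∫ x in Ω, q (0, x) ^ 2 ≤ (exp (L * X) * P) ^ 2 * volume.real Ω :=
        (le_norm_self _).trans (norm_setIntegral_le_of_norm_le_const hΩb.measure_lt_top hsq)
    _ = volume.real Ω * exp (2 * L * X) * P ^ 2 := by
        rw [mul_pow, ← exp_nat_mul]; push_cast; ring_nf
    _ ≤ exp (volume.real Ω * X) * exp (2 * L * X) * P ^ 2 := by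
        gcongr
        exact (le_mul_of_one_le_right measureReal_nonneg hX).trans
          (by linarith [add_one_le_exp (volume.real Ω * X)])
    _ = exp ((volume.real Ω + 2 * L) * X) * P ^ 2 := by rw [← exp_add, ← add_mul]

end Observability

section Potential

lemma ae_norm_le_toReal_eLpNorm_top {X F : Type*} [MeasurableSpace X] [NormedAddCommGroup F]
    {μ : Measure X} {f : X → F} {B : ℝ} (hf : ∀ᵐ x ∂μ, ‖f x‖ ≤ B) :
    ∀ᵐ x ∂μ, ‖f x‖ ≤ (eLpNorm f ⊤ μ).toReal := by
  rw [eLpNorm_exponent_top]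
  filter_upwards [ae_le_eLpNormEssSup (f := f) (μ := μ)] with x hx
  simpa using ENNReal.toReal_mono (eLpNormEssSup_lt_top_of_ae_bound hf).ne hx

lemma le_of_ae_le_of_continuousOn {X α : Type*} [TopologicalSpace X] [MeasurableSpace X]
    {μ : Measure X} [μ.IsOpenPosMeasure] [TopologicalSpace α] [LinearOrder α]
    [OrderClosedTopology α] {U : Set X} {f g : X → α} (hU : IsOpen U)
    (hfg : ∀ᵐ x ∂μ.restrict U, f x ≤ g x) (hf : ContinuousOn f U) (hg : ContinuousOn g U) :
    ∀ x ∈ U, f x ≤ g x := by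
  have hsup : EqOn (fun x => max (f x) (g x)) g U :=
    Measure.eqOn_open_of_ae_eq (hfg.mono fun _ => max_eq_right) hU (hf.sup hg) hg
  exact fun x hx => max_eq_right_iff.1 (hsup hx)

lemma contDiffOn_two_of_continuousOn_fderiv {F G : Type*} [NormedAddCommGroup F] [NormedSpace ℝ F]
    [NormedAddCommGroup G] [NormedSpace ℝ G] {u : F → G} {U : Set F} (hU : IsOpen U)
    (hu : ∀ x ∈ U, DifferentiableAt ℝ u x) (hu' : ∀ x ∈ U, DifferentiableAt ℝ (fderiv ℝ u) x)
    (hu'' : ContinuousOn (fderiv ℝ (fderiv ℝ u)) U) : ContDiffOn ℝ 2 u U := by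
  have hfderiv : ContDiffOn ℝ (0 + 1) (fderiv ℝ u) U :=
    (contDiffOn_succ_iff_fderiv_of_isOpen hU).2
      ⟨fun x hx => (hu' x hx).differentiableWithinAt, by simp, contDiffOn_zero.2 hu''⟩
  rw [← one_add_one_eq_two, contDiffOn_succ_iff_fderiv_of_isOpen hU]
  exact ⟨fun x hx => (hu x hx).differentiableWithinAt, by simp, by simpa using hfderiv⟩

variable {E : Type*} [NormedAddCommGroup E] [InnerProductSpace ℝ E] [FiniteDimensional ℝ E]

lemma continuousOn_laplacian_slice {P : Type*} [TopologicalSpace P] {s : Set (P × E)}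
    {q : P × E → ℝ}
    (hq : ContinuousOn (fun p => fderiv ℝ (fderiv ℝ fun z => q (p.1, z)) p.2) s) :
    ContinuousOn (fun p => Δ (fun z => q (p.1, z)) p.2) s := by
  simp only [laplacian_eq_sum_fderiv_fderiv (stdOrthonormalBasis ℝ E)]
  fun_prop

lemma IsNonnegAdjointSolution.of_potential [MeasurableSpace E] [BorelSpace E] {Ω : Set E}
    {T B : ℝ} {a q qt : ℝ × E → ℝ} (hΩ : IsOpen Ω)
    (ha : ∀ p ∈ Ioo 0 T ×ˢ Ω, |a p| ≤ B)
    (hq : ContinuousOn q (Icc 0 T ×ˢ closure Ω)) (hq₀ : ∀ p ∈ Icc 0 T ×ˢ closure Ω, 0 ≤ q p)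
    (hqt : ∀ p ∈ Ioo 0 T ×ˢ Ω, HasDerivAt (fun τ => q (τ, p.2)) (qt p) p.1)
    (hqt_cont : ContinuousOn qt (Ioo 0 T ×ˢ closure Ω))
    (hdiff : ∀ p ∈ Ioo 0 T ×ˢ Ω, DifferentiableAt ℝ (fun z => q (p.1, z)) p.2)
    (hdiff₂ : ∀ p ∈ Ioo 0 T ×ˢ Ω, DifferentiableAt ℝ (fderiv ℝ fun z => q (p.1, z)) p.2)
    (hcont₂ : ContinuousOn (fun p => fderiv ℝ (fderiv ℝ fun z => q (p.1, z)) p.2)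
      (Ioo 0 T ×ˢ Ω))
    (hpde : ∀ t ∈ Ioo 0 T, ∀ x ∈ Ω,
      -qt (t, x) - Δ (fun z => q (t, z)) x + a (t, x) * q (t, x) = 0)
    (hbd : ∀ t ∈ Ioo 0 T, ∀ x ∈ frontier Ω, q (t, x) = 0) :
    IsNonnegAdjointSolution Ω T (eLpNorm a ⊤ (volume.restrict (Ioo 0 T ×ˢ Ω))).toReal q qt := by
  set A := (eLpNorm a ⊤ (volume.restrict (Ioo 0 T ×ˢ Ω))).toReal
  have hU : IsOpen (Ioo 0 T ×ˢ Ω) := isOpen_Ioo.prod hΩ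
  have hle : ∀ p ∈ Ioo 0 T ×ˢ Ω, |qt p + Δ (fun z => q (p.1, z)) p.2| ≤ A * q p := by
    refine le_of_ae_le_of_continuousOn (μ := volume) hU ?_
      ((hqt_cont.mono (prod_mono subset_rfl subset_closure)).add
        (continuousOn_laplacian_slice hcont₂)).abs
      ((hq.mono (prod_mono Ioo_subset_Icc_self subset_closure)).const_mul A)
    have hA : ∀ᵐ p ∂volume.restrict (Ioo 0 T ×ˢ Ω), ‖a p‖ ≤ A :=
      ae_norm_le_toReal_eLpNorm_top (ae_restrict_of_forall_mem hU.measurableSet ha)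
    filter_upwards [hA, ae_restrict_mem hU.measurableSet] with p hap hp
    have hqp := hq₀ p (prod_mono Ioo_subset_Icc_self subset_closure hp)
    have hsolve : qt p + Δ (fun z => q (p.1, z)) p.2 = a p * q p := by
      linarith [hpde p.1 hp.1 p.2 hp.2]
    rw [hsolve, abs_mul, abs_of_nonneg hqp]
    exact mul_le_mul_of_nonneg_right hap hqp
  exact {
    continuousOn := hq
    nonneg := fun t ht x hx => hq₀ (t, x) ⟨ht, hx⟩
    hasDerivAt := fun t ht x hx => hqt (t, x) ⟨ht, hx⟩
    continuousOn_deriv := hqt_cont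
    contDiffOn := fun t ht => contDiffOn_two_of_continuousOn_fderiv hΩ
      (fun x hx => hdiff (t, x) ⟨ht, hx⟩) (fun x hx => hdiff₂ (t, x) ⟨ht, hx⟩)
      (continuousOn_comp_prodMk_left hcont₂ ht)
    abs_deriv_add_laplacian_le := fun t ht x hx => hle (t, x) ⟨ht, hx⟩
    eq_zero_of_mem_frontier := hbd }

end Potential

lemma spaceLaplacian_eq_laplacian {N : ℕ} {u : EuclideanSpace ℝ (Fin N) → ℝ}
    {x : EuclideanSpace ℝ (Fin N)} (hu : DifferentiableAt ℝ (fderiv ℝ u) x) :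
    spaceLaplacian u x = Δ u x := by
  simp [spaceLaplacian, laplacian_eq_sum_fderiv_apply (EuclideanSpace.basisFun (Fin N) ℝ) hu]

theorem observability_L2_L1_dirichlet
    (N : ℕ) (hN : 1 ≤ N)
    (Ω ω₀ ω : Set (EuclideanSpace ℝ (Fin N)))
    (hΩo : IsOpen Ω) (hΩb : Bornology.IsBounded Ω) (hΩc : IsConnected Ω)
    (hω₀o : IsOpen ω₀) (hω₀ne : ω₀.Nonempty) (hωo : IsOpen ω) (hωne : ω.Nonempty)
    (hω₀ω : closure ω₀ ⊆ ω) (hωΩ : ω ⊆ Ω)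
    (η : EuclideanSpace ℝ (Fin N) → ℝ) (hη : ContDiff ℝ 2 η)
    (hηpos : ∀ x ∈ Ω, 0 < η x) (hηbd : ∀ x ∈ frontier Ω, η x = 0)
    (hηgrad : ∀ x ∈ closure (Ω \ ω₀), 0 < ‖gradient η x‖) :
    ∃ C > (0:ℝ),
      ∀ T : ℝ, 0 < T →
      ∀ a : ℝ × EuclideanSpace ℝ (Fin N) → ℝ, Measurable a →
      (∃ B : ℝ, ∀ p ∈ Set.Ioo (0:ℝ) T ×ˢ Ω, |a p| ≤ B) →
      ∀ q qt : ℝ × EuclideanSpace ℝ (Fin N) → ℝ,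
        ContinuousOn q (Set.Icc 0 T ×ˢ closure Ω) →
        (∀ p ∈ Set.Icc 0 T ×ˢ closure Ω, 0 ≤ q p) →
        (∀ p ∈ Set.Ioo 0 T ×ˢ closure Ω,
          HasDerivAt (fun τ => q (τ, p.2)) (qt p) p.1) →
        ContinuousOn qt (Set.Ioo 0 T ×ˢ closure Ω) →
        (∀ p ∈ Set.Ioo 0 T ×ˢ closure Ω,
          DifferentiableAt ℝ (fun z => q (p.1, z)) p.2) →
        (∀ p ∈ Set.Ioo 0 T ×ˢ closure Ω,
          DifferentiableAt ℝ (fun y => fderiv ℝ (fun z => q (p.1, z)) y) p.2) →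
        ContinuousOn (fun p : ℝ × EuclideanSpace ℝ (Fin N) =>
          fderiv ℝ (fun z => q (p.1, z)) p.2) (Set.Ioo 0 T ×ˢ closure Ω) →
        ContinuousOn (fun p : ℝ × EuclideanSpace ℝ (Fin N) =>
          fderiv ℝ (fun y => fderiv ℝ (fun z => q (p.1, z)) y) p.2)
          (Set.Ioo 0 T ×ˢ closure Ω) →
        (∀ t ∈ Set.Ioo (0:ℝ) T, ∀ x ∈ Ω,
          -qt (t, x) - spaceLaplacian (fun z => q (t, z)) x
            + a (t, x) * q (t, x) = 0) →
        (∀ t ∈ Set.Ioo (0:ℝ) T, ∀ x ∈ frontier Ω, q (t, x) = 0) →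
        (∫ x in Ω, q (0, x) ^ 2)
          ≤ Real.exp (C * (1 + 1/T + T * (eLpNorm a ⊤ (volume.restrict (Set.Ioo (0:ℝ) T ×ˢ Ω))).toReal + Real.sqrt (eLpNorm a ⊤ (volume.restrict (Set.Ioo (0:ℝ) T ×ˢ Ω))).toReal)) *
            (∫ t in Set.Ioo (0:ℝ) T, ∫ x in ω, q (t, x)) ^ 2 := by
  obtain ⟨C, hC, hobs⟩ := observability_L2_L1_dirichlet_general hΩo hΩb hωo.measurableSet hωΩ hη
    hηpos hηbd fun x hx => hηgrad x <|
      closure_mono (sdiff_subset_sdiff_right (subset_closure.trans hω₀ω)) hx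
  refine ⟨C, hC, fun T hT a _ ⟨B, ha⟩ q qt hq hq₀ hqt hqt_cont hdiff hdiff₂ _ hcont₂ hpde hbd => ?_⟩
  have hsub : Ioo 0 T ×ˢ Ω ⊆ Ioo 0 T ×ˢ closure Ω := prod_mono subset_rfl subset_closure
  exact hobs T hT _ ENNReal.toReal_nonneg q qt <| .of_potential hΩo ha hq hq₀
    (fun p hp => hqt p (hsub hp)) hqt_cont (fun p hp => hdiff p (hsub hp))
    (fun p hp => hdiff₂ p (hsub hp)) (hcont₂.mono hsub) (fun t ht x hx => by
      rw [← spaceLaplacian_eq_laplacian (hdiff₂ (t, x) (hsub ⟨ht, hx⟩))]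
      exact hpde t ht x hx) hbd
end

section
/- The function g is continuous on ℝ. Moreover, if f satisfies the growth condition for some α ∈ (0,2], then for every ε > 0 there exists a constant C_ε > 0 such that |g(s)|^{1/2} ≤ ε log(2 + |s|) + C_ε for every s ∈ ℝ. -/
/-!
Since `f 0 = 0`, the function `g` is the divided slope `dslope f 0`, which is continuous exactly
when `f` is continuous and differentiable at `0`. Dividing the growth condition by `‖s‖` gives
`g = o(log ^ α (1 + ‖s‖))`, hence `g = o(log ^ 2 (2 + ‖s‖))`, and taking square roots
`√‖g‖ = o(log (2 + ‖s‖))` at infinity. The constant `C` absorbs the compact set left over.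
-/

open Filter Asymptotics

section Asymptotics

theorem exists_norm_le_mul_norm_add_of_isLittleO_cocompact {X E F : Type*} [TopologicalSpace X]
    [SeminormedAddCommGroup E] [SeminormedAddCommGroup F] {u : X → E} {v : X → F}
    (hu : Continuous u) (huv : u =o[cocompact X] v) {ε : ℝ} (hε : 0 < ε) :
    ∃ C > 0, ∀ x, ‖u x‖ ≤ ε * ‖v x‖ + C := by
  obtain ⟨K, hK, hKu⟩ := mem_cocompact.1 (huv.bound hε)
  obtain ⟨M, hM⟩ := hK.exists_bound_of_continuousOn hu.continuousOn
  refine ⟨max M 1, by positivity, fun x => ?_⟩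
  by_cases hx : x ∈ K
  · calc ‖u x‖ ≤ max M 1 := (hM x hx).trans (le_max_left M 1)
      _ ≤ ε * ‖v x‖ + max M 1 := le_add_of_nonneg_left (by positivity)
  · calc ‖u x‖ ≤ ε * ‖v x‖ := hKu hx
      _ ≤ ε * ‖v x‖ + max M 1 := le_add_of_nonneg_right (by positivity)

theorem isLittleO_sqrt_norm_of_isLittleO_sq {X E : Type*} [SeminormedAddCommGroup E] {l : Filter X}
    {u : X → E} {v : X → ℝ} (h : u =o[l] fun x => v x ^ 2) :
    (fun x => √‖u x‖) =o[l] v := by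
  refine IsLittleO.of_pow (n := 2) ?_ two_ne_zero
  exact h.norm_left.congr_left fun x => (Real.sq_sqrt (norm_nonneg (u x))).symm

theorem isBigO_log_add_rpow_log_add_rpow {a b α β : ℝ} (hab : a ≤ b) (hαβ : α ≤ β) (hβ : 0 ≤ β) :
    (fun x => Real.log (a + x) ^ α) =O[atTop] fun x => Real.log (b + x) ^ β := by
  have hlog : ∀ᶠ x in atTop, 1 ≤ Real.log (a + x) :=
    (Real.tendsto_log_atTop.comp
      (tendsto_atTop_add_const_left atTop a tendsto_id)).eventually_ge_atTop 1
  refine IsBigO.of_norm_eventuallyLE ?_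
  filter_upwards [hlog, eventually_gt_atTop (-a)] with x hx hax
  have hpos : 0 < a + x := by linarith
  rw [Real.norm_of_nonneg (by positivity)]
  calc Real.log (a + x) ^ α ≤ Real.log (a + x) ^ β := Real.rpow_le_rpow_of_exponent_le hx hαβ
    _ ≤ Real.log (b + x) ^ β := by gcongr

end Asymptotics

section Slope

variable {𝕜 E : Type*} [NontriviallyNormedField 𝕜] [NormedAddCommGroup E] [NormedSpace 𝕜 E]
  {f g : 𝕜 → E}

theorem continuous_dslope_iff {a : 𝕜} :
    Continuous (dslope f a) ↔ Continuous f ∧ DifferentiableAt 𝕜 f a := by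
  simpa only [continuousOn_univ] using continuousOn_dslope (f := f) (a := a) univ_mem

theorem eq_dslope_zero (hf0 : f 0 = 0) (hg : ∀ s ≠ 0, g s = s⁻¹ • f s) (hg0 : g 0 = deriv f 0) :
    g = dslope f 0 := by
  funext s
  rcases eq_or_ne s 0 with rfl | hs
  · rw [hg0, dslope_same]
  · rw [hg s hs, dslope_of_ne f hs, slope_def_module, hf0, sub_zero, sub_zero]

theorem isLittleO_inv_smul_of_isLittleO_norm_mul {l : Filter 𝕜} {v : 𝕜 → ℝ}
    (hf : f =o[l] fun s => ‖s‖ * v s) : (fun s => s⁻¹ • f s) =o[l] v := by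
  have hinv : (fun s : 𝕜 => s⁻¹) =O[l] fun s => ‖s‖⁻¹ :=
    IsBigO.of_bound' (.of_forall fun s => by rw [norm_inv, norm_inv, norm_norm])
  have hcancel : (fun s => ‖s‖⁻¹ • (‖s‖ * v s)) =O[l] v := by
    refine IsBigO.of_bound' (.of_forall fun s => ?_)
    rcases eq_or_ne s 0 with rfl | hs
    · simp
    · rw [smul_eq_mul, inv_mul_cancel_left₀ (norm_ne_zero_iff.2 hs)]
  exact (hinv.smul_isLittleO hf).trans_isBigO hcancel

theorem isLittleO_sqrt_norm_inv_smul_log [ProperSpace 𝕜] {α : ℝ} (hα : α ≤ 2)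
    (hf : f =o[cocompact 𝕜] fun s => ‖s‖ * Real.log (1 + ‖s‖) ^ α) :
    (fun s => √‖s⁻¹ • f s‖) =o[cocompact 𝕜] fun s => Real.log (2 + ‖s‖) := by
  have hlog : (fun s : 𝕜 => Real.log (1 + ‖s‖) ^ α) =O[cocompact 𝕜]
      fun s => Real.log (2 + ‖s‖) ^ (2 : ℝ) :=
    (isBigO_log_add_rpow_log_add_rpow one_le_two hα zero_le_two).comp_tendsto
      (tendsto_norm_cocompact_atTop (E := 𝕜))
  refine isLittleO_sqrt_norm_of_isLittleO_sq ?_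
  simpa only [Real.rpow_two] using
    (isLittleO_inv_smul_of_isLittleO_norm_mul hf).trans_isBigO hlog

theorem g_continuous_and_log_bound_general [ProperSpace 𝕜] (hf : Continuous f)
    (hf' : DifferentiableAt 𝕜 f 0) (hf0 : f 0 = 0) (hg : ∀ s ≠ 0, g s = s⁻¹ • f s)
    (hg0 : g 0 = deriv f 0) :
    Continuous g ∧
      ∀ α ≤ (2 : ℝ), (f =o[cocompact 𝕜] fun s => ‖s‖ * Real.log (1 + ‖s‖) ^ α) →
        ∀ ε > 0, ∃ C > 0, ∀ s, √‖g s‖ ≤ ε * Real.log (2 + ‖s‖) + C := by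
  have hgc : Continuous g := eq_dslope_zero hf0 hg hg0 ▸ continuous_dslope_iff.2 ⟨hf, hf'⟩
  refine ⟨hgc, fun α hα hgrowth ε hε => ?_⟩
  have hne : ∀ᶠ s : 𝕜 in cocompact 𝕜, s ≠ 0 := isCompact_singleton.compl_mem_cocompact
  have hsqrt : (fun s => √‖g s‖) =o[cocompact 𝕜] fun s => Real.log (2 + ‖s‖) :=
    (isLittleO_sqrt_norm_inv_smul_log hα hgrowth).congr'
      (hne.mono fun s hs => by simp only [hg s hs]) .rfl
  obtain ⟨C, hC, hbound⟩ :=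
    exists_norm_le_mul_norm_add_of_isLittleO_cocompact (by fun_prop) hsqrt hε
  refine ⟨C, hC, fun s => ?_⟩
  have hlog : 0 ≤ Real.log (2 + ‖s‖) := Real.log_nonneg (by linarith [norm_nonneg s])
  simpa only [Real.norm_of_nonneg (Real.sqrt_nonneg _),
    Real.norm_of_nonneg hlog] using hbound s

end Slope

theorem eq_zero_of_norm_mul_log_rpow_eq_zero {E : Type*} [NormedAddCommGroup E] {x : E} {α : ℝ}
    (h : ‖x‖ * Real.log (1 + ‖x‖) ^ α = 0) : x = 0 := by
  by_contra hx
  have hnorm : 0 < ‖x‖ := norm_pos_iff.2 hx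
  have hlog : 0 < Real.log (1 + ‖x‖) := Real.log_pos (by linarith)
  exact (by positivity : ‖x‖ * Real.log (1 + ‖x‖) ^ α ≠ 0) h

theorem g_continuous_and_log_bound (f : ℝ → ℝ) (hf : ContDiff ℝ 1 f) (hf0 : f 0 = 0)
    (g : ℝ → ℝ) (hg : ∀ s : ℝ, s ≠ 0 → g s = f s / s) (hg0 : g 0 = deriv f 0) :
    Continuous g ∧
    (∀ α : ℝ, 0 < α → α ≤ 2 →
      Filter.Tendsto (fun s : ℝ => f s / (|s| * Real.log (1 + |s|) ^ α))
        (Filter.cocompact ℝ) (nhds 0) →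
      ∀ ε > (0 : ℝ), ∃ C > (0 : ℝ), ∀ s : ℝ,
        Real.sqrt |g s| ≤ ε * Real.log (2 + |s|) + C) := by
  obtain ⟨hgc, hbound⟩ := g_continuous_and_log_bound_general hf.continuous
    (hf.differentiable one_ne_zero 0) hf0 (fun s hs => (hg s hs).trans (div_eq_inv_mul _ _)) hg0
  exact ⟨hgc, fun α _ hα hgrowth => hbound α hα <| isLittleO_of_tendsto
    (fun s hs => eq_zero_of_norm_mul_log_rpow_eq_zero hs ▸ hf0) hgrowth⟩
end

section
/- For every t ≥ T₁ one has v(t) > 0 and F(v(t)) = (t − T₁) + F(v₀). -/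
open MeasureTheory

/-!
Separating variables in `v' = -f(v)` shows that `v` needs time `∫ σ in v b..v a, 1 / f σ` to descend
from `v a` to `v b`. Near `0` a differentiable `f` with `f 0 = 0` is at most linear, so `1 / f` is
not integrable there and `v` cannot reach `0` in finite time (Osgood's criterion). Once `v` is known
to stay positive, the formula is the same identity with the tail `F v₀` added to both sides.
-/

section

open Set Filter Asymptotics
open scoped Topology

theorem integral_one_div_eq_sub_of_hasDerivAt {X v : ℝ → ℝ} {a b : ℝ} (hab : a ≤ b)
    (hv : ContinuousOn v (Icc a b)) (hode : ∀ t ∈ Ioo a b, HasDerivAt v (X (v t)) t)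
    (hX : ContinuousOn X (v '' Icc a b)) (hX₀ : ∀ t ∈ Icc a b, X (v t) ≠ 0) :
    ∫ x in v a..v b, 1 / X x = b - a := by
  have hcont : ContinuousOn (fun x => 1 / X x) (v '' Icc a b) :=
    continuousOn_const.div hX (forall_mem_image.2 hX₀)
  have hcancel : EqOn (fun t => ((fun x => 1 / X x) ∘ v) t * X (v t)) (fun _ => 1) (Icc a b) :=
    fun t ht => one_div_mul_cancel (hX₀ t ht)
  rw [← uIcc_of_le hab] at hv hcancel
  calc ∫ x in v a..v b, 1 / X x
      = ∫ t in a..b, ((fun x => 1 / X x) ∘ v) t * X (v t) := by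
        refine (intervalIntegral.integral_comp_mul_deriv''' hv ?_ ?_ ?_ ?_).symm
        · rw [min_eq_left hab, max_eq_right hab]
          exact fun t ht => (hode t ht).hasDerivWithinAt
        · rw [min_eq_left hab, max_eq_right hab]
          exact hcont.mono (image_mono Ioo_subset_Icc_self)
        · rw [← uIcc_of_le hab] at hcont
          exact hcont.integrableOn_compact (isCompact_uIcc.image_of_continuousOn hv)
        · exact continuousOn_const.integrableOn_compact isCompact_uIcc
            |>.congr_fun hcancel.symm measurableSet_uIcc
    _ = ∫ _ in a..b, (1 : ℝ) := intervalIntegral.integral_congr hcancel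
    _ = b - a := integral_one

theorem integrableOn_Ioc_of_nonneg_of_intervalIntegral_le {g : ℝ → ℝ} {a b I : ℝ} (hab : a < b)
    (hg₀ : ∀ x ∈ Ioc a b, 0 ≤ g x) (hg : ∀ x ∈ Ioo a b, IntervalIntegrable g volume x b)
    (hI : ∀ x ∈ Ioo a b, ∫ s in x..b, g s ≤ I) :
    IntegrableOn g (Ioc a b) := by
  obtain ⟨u, -, hu, hlim⟩ := exists_seq_strictAnti_tendsto' hab
  refine integrableOn_Ioc_of_intervalIntegral_norm_bounded_left (I := I) (fun n => (hg _ (hu n)).1)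
    hlim (.of_forall fun n => ?_)
  calc ∫ s in Ioc (u n) b, ‖g s‖
      = ∫ s in Ioc (u n) b, g s := setIntegral_congr_fun measurableSet_Ioc fun s hs =>
        Real.norm_of_nonneg (hg₀ s ⟨(hu n).1.trans hs.1, hs.2⟩)
    _ = ∫ s in u n..b, g s := (intervalIntegral.integral_of_le (hu n).2.le).symm
    _ ≤ I := hI _ (hu n)

theorem not_integrableAtFilter_one_div_of_isBigO_sub {f : ℝ → ℝ} {c : ℝ}
    (hf : f =O[𝓝[>] c] fun s => s - c) (hf₀ : ∀ᶠ s in 𝓝[>] c, f s ≠ 0) :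
    ¬IntegrableAtFilter (fun s => 1 / f s) (𝓝[>] c) := by
  rintro ⟨u, hu, hint⟩
  have hderiv : ∀ s ∈ Ioi c, HasDerivAt (fun s => Real.log (s - c)) (1 / (s - c)) s :=
    fun s hs => ((hasDerivAt_id s).sub_const c).log (sub_pos.2 hs).ne'
  have hsub : Tendsto (fun s => s - c) (𝓝[>] c) (𝓝[≠] 0) := by
    rw [← sub_self c]
    exact (((hasDerivAt_id c).sub_const c).tendsto_nhdsNE one_ne_zero).mono_left
      (nhdsGT_le_nhdsNE c)
  have hlog : Tendsto (fun s => ‖Real.log (s - c)‖) (𝓝[>] c) atTop :=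
    tendsto_abs_atBot_atTop.comp (Real.tendsto_log_nhdsNE_zero.comp hsub)
  refine not_integrableOn_of_tendsto_norm_atTop_of_deriv_isBigO_filter (𝓝[>] c) hu ?_ hlog ?_ hint
  · filter_upwards [self_mem_nhdsWithin] with s hs using (hderiv s hs).differentiableAt
  · refine IsBigO.congr' (hf.inv_rev (hf₀.mono fun s hs h => absurd h hs)) ?_ ?_
    · filter_upwards [self_mem_nhdsWithin] with s hs
      rw [(hderiv s hs).deriv, one_div]
    · exact .of_forall fun s => (one_div _).symm

theorem not_integrableAtFilter_one_div_of_differentiableAt {f : ℝ → ℝ} {c : ℝ}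
    (hf : DifferentiableAt ℝ f c) (hfc : f c = 0) (hf₀ : ∀ᶠ s in 𝓝[>] c, f s ≠ 0) :
    ¬IntegrableAtFilter (fun s => 1 / f s) (𝓝[>] c) := by
  refine not_integrableAtFilter_one_div_of_isBigO_sub ?_ hf₀
  simpa only [hfc, sub_zero] using hf.isBigO_sub.mono nhdsWithin_le_nhds

theorem exists_first_nonpos {v : ℝ → ℝ} {a b : ℝ} (hab : a ≤ b) (hv : ContinuousOn v (Icc a b))
    (hva : 0 < v a) (hvb : v b ≤ 0) :
    ∃ c ∈ Ioc a b, v c ≤ 0 ∧ ∀ t ∈ Ico a c, 0 < v t := by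
  have hcompact : IsCompact (Icc a b ∩ v ⁻¹' Iic 0) :=
    isCompact_Icc.of_isClosed_subset (hv.preimage_isClosed_of_isClosed isClosed_Icc isClosed_Iic)
      inter_subset_left
  obtain ⟨c, ⟨hc, hvc⟩, hleast⟩ := hcompact.exists_isLeast ⟨b, right_mem_Icc.2 hab, hvb⟩
  have hac : a ≠ c := by
    rintro rfl
    exact hva.not_ge hvc
  refine ⟨c, ⟨hc.1.lt_of_ne hac, hc.2⟩, hvc, fun t ht => ?_⟩
  by_contra! hvt
  exact ht.2.not_ge (hleast ⟨⟨ht.1, ht.2.le.trans hc.2⟩, hvt⟩)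

section PositiveField

variable {f v : ℝ → ℝ} (hf : ContinuousOn f (Ioi 0)) (hpos : ∀ s, 0 < s → 0 < f s)
include hf hpos

theorem continuousOn_one_div_of_pos : ContinuousOn (fun σ => 1 / f σ) (Ioi 0) :=
  continuousOn_const.div hf fun s hs => (hpos s hs).ne'

theorem intervalIntegrable_one_div_of_pos {x y : ℝ} (hx : 0 < x) (hy : 0 < y) :
    IntervalIntegrable (fun σ => 1 / f σ) volume x y :=
  ((continuousOn_one_div_of_pos hf hpos).mono fun _ hs => (lt_min hx hy).trans_le hs.1)
    |>.intervalIntegrable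

theorem integrableOn_Ici_one_div_of_pos (hint : IntegrableAtFilter (fun σ => 1 / f σ) atTop)
    {x : ℝ} (hx : 0 < x) : IntegrableOn (fun σ => 1 / f σ) (Ici x) :=
  integrableOn_Ici_iff_integrableAtFilter_atTop.2
    ⟨hint, (continuousOn_one_div_of_pos hf hpos).mono (Ici_subset_Ioi.2 hx)
      |>.locallyIntegrableOn measurableSet_Ici⟩

theorem integral_one_div_eq_sub_of_hasDerivAt_neg {a b : ℝ} (hab : a ≤ b)
    (hv : ContinuousOn v (Icc a b)) (hode : ∀ t ∈ Ioo a b, HasDerivAt v (-f (v t)) t)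
    (hv₀ : ∀ t ∈ Icc a b, 0 < v t) :
    ∫ σ in v b..v a, 1 / f σ = b - a := by
  have himage : v '' Icc a b ⊆ Ioi 0 := image_subset_iff.2 hv₀
  rw [← integral_one_div_eq_sub_of_hasDerivAt (X := fun x => -f x) hab hv hode
      (hf.mono himage).neg fun t ht => neg_ne_zero.2 (hpos _ (hv₀ t ht)).ne',
    intervalIntegral.integral_symm]
  simp only [one_div_neg_eq_neg_one_div, intervalIntegral.integral_neg]

theorem integrableAtFilter_one_div_of_reaches_nonpos {a b : ℝ} (hab : a < b)
    (hv : ContinuousOn v (Icc a b)) (hode : ∀ t ∈ Ioo a b, HasDerivAt v (-f (v t)) t)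
    (hv₀ : ∀ t ∈ Ico a b, 0 < v t) (hvb : v b ≤ 0) :
    IntegrableAtFilter (fun σ => 1 / f σ) (𝓝[>] 0) := by
  have hva : 0 < v a := hv₀ a (left_mem_Ico.2 hab)
  have hbound : ∀ ε ∈ Ioo 0 (v a), ∫ σ in ε..v a, 1 / f σ ≤ b - a := by
    rintro ε ⟨hε, hεa⟩
    obtain ⟨s, hs, rfl⟩ := intermediate_value_Icc' hab.le hv ⟨hvb.trans hε.le, hεa.le⟩
    have hsb : s < b := hs.2.lt_of_ne fun h => hε.not_ge (h ▸ hvb)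
    rw [integral_one_div_eq_sub_of_hasDerivAt_neg hf hpos hs.1
      (hv.mono (Icc_subset_Icc_right hs.2)) (fun t ht => hode t ⟨ht.1, ht.2.trans hsb⟩)
      fun t ht => hv₀ t ⟨ht.1, ht.2.trans_lt hsb⟩]
    exact sub_le_sub_right hs.2 a
  exact ⟨Ioc 0 (v a), Ioc_mem_nhdsGT hva, integrableOn_Ioc_of_nonneg_of_intervalIntegral_le hva
    (fun σ hσ => (one_div_pos.2 (hpos σ hσ.1)).le)
    (fun ε hε => intervalIntegrable_one_div_of_pos hf hpos hε.1 hva) hbound⟩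

theorem pos_of_hasDerivAt_neg_of_not_integrableAtFilter
    (hosgood : ¬IntegrableAtFilter (fun σ => 1 / f σ) (𝓝[>] 0)) {a b : ℝ} (hab : a ≤ b)
    (hv : ContinuousOn v (Icc a b)) (hode : ∀ t ∈ Ioo a b, HasDerivAt v (-f (v t)) t)
    (hva : 0 < v a) : 0 < v b := by
  by_contra! hvb
  obtain ⟨c, ⟨hac, hcb⟩, hvc, hv₀⟩ := exists_first_nonpos hab hv hva hvb
  exact hosgood <| integrableAtFilter_one_div_of_reaches_nonpos hf hpos hac
    (hv.mono (Icc_subset_Icc_right hcb)) (fun t ht => hode t ⟨ht.1, ht.2.trans_le hcb⟩) hv₀ hvc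

end PositiveField

theorem ode_solution_formula_general (f : ℝ → ℝ) (hf : ContinuousOn f (Ioi 0))
    (hpos : ∀ s : ℝ, 0 < s → 0 < f s)
    (hosgood : ¬IntegrableAtFilter (fun σ => 1 / f σ) (𝓝[>] 0))
    (hint : IntegrableAtFilter (fun σ => 1 / f σ) atTop)
    (F : ℝ → ℝ) (hF : ∀ s : ℝ, 0 < s → F s = ∫ σ in Ici s, 1 / f σ)
    (T₁ v₀ : ℝ) (hv₀ : 0 < v₀) (v : ℝ → ℝ)
    (hvc : ContinuousOn v (Ici T₁)) (hvT₁ : v T₁ = v₀)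
    (hode : ∀ t : ℝ, T₁ < t → HasDerivAt v (-(f (v t))) t) :
    ∀ t : ℝ, T₁ ≤ t → 0 < v t ∧ F (v t) = (t - T₁) + F v₀ := by
  subst hvT₁
  have hv : ∀ t, ContinuousOn v (Icc T₁ t) := fun t => hvc.mono Icc_subset_Ici_self
  have hvpos : ∀ t, T₁ ≤ t → 0 < v t := fun t ht =>
    pos_of_hasDerivAt_neg_of_not_integrableAtFilter hf hpos hosgood ht (hv t)
      (fun s hs => hode s hs.1) hv₀
  refine fun t ht => ⟨hvpos t ht, ?_⟩
  have htail : ∀ s, 0 < s → IntegrableOn (fun σ => 1 / f σ) (Ici s) := fun _ hs =>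
    integrableOn_Ici_one_div_of_pos hf hpos hint hs
  rw [← sub_eq_iff_eq_add, hF _ (hvpos t ht), hF _ hv₀,
    intervalIntegral.integral_Ici_sub_Ici' (htail _ (hvpos t ht)) (htail _ hv₀)]
  exact integral_one_div_eq_sub_of_hasDerivAt_neg hf hpos ht (hv t) (fun s hs => hode s hs.1)
    fun s hs => hvpos s hs.1

end

theorem ode_solution_formula (f : ℝ → ℝ) (hf : ContDiff ℝ 1 f) (hf0 : f 0 = 0)
    (hpos : ∀ s : ℝ, 0 < s → 0 < f s)
    (hint : IntegrableOn (fun σ => 1 / f σ) (Set.Ici (1 : ℝ)))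
    (F : ℝ → ℝ) (hF : ∀ s : ℝ, F s = ∫ σ in Set.Ici s, 1 / f σ)
    (T₁ v₀ : ℝ) (hv₀ : 0 < v₀) (v : ℝ → ℝ)
    (hvc : ContinuousOn v (Set.Ici T₁)) (hvT₁ : v T₁ = v₀)
    (hode : ∀ t : ℝ, T₁ < t → HasDerivAt v (-(f (v t))) t) :
    ∀ t : ℝ, T₁ ≤ t → 0 < v t ∧ F (v t) = (t - T₁) + F v₀ :=
  ode_solution_formula_general f hf.continuous.continuousOn hpos
    (not_integrableAtFilter_one_div_of_differentiableAt (hf.differentiable one_ne_zero 0) hf0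
      (eventually_mem_nhdsWithin.mono fun s hs => (hpos s hs).ne'))
    ⟨Set.Ici 1, Filter.Ici_mem_atTop 1, hint⟩ F (fun s _ => hF s) T₁ v₀ hv₀ v hvc hvT₁ hode
end
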